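/- For every finite simple graph G₀ with maximum degree at most 3, there exists a natural number N such that in the 3-regular graph game starting from the disjoint union of G₀ and N additional isolated vertices, the second player has a strategy ensuring that the final graph is not 2-connected (that is, the final graph is disconnected, has fewer than 3 vertices, or has a vertex whose removal disconnects it). -/

import Mathlib

/-!
The second player watches the component `S` of one fixed vertex `r`, which is isolated at the start,
and tries to create a set `A` of vertices, neither empty nor everything, that at most one edge can
leave in any continuation (`Win`). Such an `A` ends the discussion: in the final graph either no edge
leaves `A`, or the inner end of the only edge leaving `A` is a cut vertex (`Win.not_two_connected`).
If the strategy lasts forever without producing such an `A`, the final graph still has an isolated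
vertex and is disconnected. So it suffices to bound the number of edges that can be drawn before
`Win` holds; `N` is chosen beyond that bound.

Write the free valency of a vertex for three minus its degree, and call the vertices of `S` of free
valency one and two its *ones* and *twos*; once `S` has at least four vertices there are no others
except saturated ones. The potential `pot` is twice the total free valency of `S` plus the total
degree outside `S`. An edge inside `S` lowers it by `4`, any other edge raises it by at most `2`
(`pot_inside`, `pot_outside`, `pot_attach`; the last uses that a connected graph on `t` vertices has
at least `t - 1` edges). If the second player always plays inside `S`, each round lowers the
potential by at least `2`.

The second player cannot profitably do so in two kinds of positions: `S` has exactly two ones, adjacent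
to each other (`IsQ`), or exactly two twos and no ones (`IsFat`). There an isolated vertex is attached
to `S` instead. In a third kind, six ones and no twos (`IsSix`), an inner move is made that may
allow the opponent to produce a position `IsQ`. Everywhere else there is an inner move to a *safe* position,
from which the opponent can reach neither `IsQ` nor `IsFat` (`step_normal`, `safe_reply`). Weighting
the three kinds by `tau = 18, 9, 3`, the quantity `mu = 8 * pot + 4 * tau + totalDeg` never increases
over a round (`round`). As `totalDeg`, twice the number of edges, is a summand of `mu`, the number of
edges stays bounded. The few opening rounds, in which `S` is brought to at least four vertices by
attaching isolated vertices to `r`, raise the total degree by at most `14`.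
-/

open SimpleGraph

namespace GraphGame

/-- The degree of a vertex, defined via the cardinality of its neighbor set. -/
noncomputable def deg {V : Type} (G : SimpleGraph V) (v : V) : ℕ :=
  (G.neighborSet v).ncard

/-- The graph obtained from `G` by adding the edge between `u` and `v`. -/
def addEdge {V : Type} (G : SimpleGraph V) (u v : V) : SimpleGraph V :=
  G ⊔ SimpleGraph.fromEdgeSet {s(u, v)}

/-- A legal move in the `k`-regular graph game: draw an edge between two distinct
non-adjacent vertices, so that afterwards every vertex still has degree at most `k`. -/
def LegalMove {V : Type} (k : ℕ) (G : SimpleGraph V) (u v : V) : Prop :=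
  u ≠ v ∧ ¬ G.Adj u v ∧ ∀ w, deg (addEdge G u v) w ≤ k

/-- A position is terminal when no legal move remains. -/
def Terminal {V : Type} (k : ℕ) (G : SimpleGraph V) : Prop :=
  ∀ u v, ¬ LegalMove k G u v

/-- A strategy (a choice of an edge to draw at every position) is valid if it assigns a
legal move to every non-terminal position. -/
def ValidStrategy {V : Type} (k : ℕ) (s : SimpleGraph V → V × V) : Prop :=
  ∀ G : SimpleGraph V, ¬ Terminal k G → LegalMove k G (s G).1 (s G).2

/-- `IsPlay k r s G₀ g` : `g` is a play of the `k`-regular graph game starting from `G₀`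
in which the player moving at steps `i` with `i % 2 = r` (so `r = 0` for the first player
and `r = 1` for the second player) follows the strategy `s`, and the opponent moves
arbitrarily (legally).  Once a terminal position is reached the sequence stays constant. -/
def IsPlay {V : Type} (k r : ℕ) (s : SimpleGraph V → V × V) (G₀ : SimpleGraph V)
    (g : ℕ → SimpleGraph V) : Prop :=
  g 0 = G₀ ∧ ∀ i : ℕ,
    (Terminal k (g i) → g (i + 1) = g i) ∧
    (¬ Terminal k (g i) →
      (i % 2 = r → g (i + 1) = addEdge (g i) (s (g i)).1 (s (g i)).2) ∧
      (i % 2 ≠ r → ∃ u v, LegalMove k (g i) u v ∧ g (i + 1) = addEdge (g i) u v))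

/-- The player moving at steps `≡ r (mod 2)` has a strategy ensuring that the final graph
(i.e. the terminal graph reached at the end of every play) satisfies `P`. -/
def Ensures {V : Type} (k r : ℕ) (G₀ : SimpleGraph V) (P : SimpleGraph V → Prop) : Prop :=
  ∃ s : SimpleGraph V → V × V, ValidStrategy k s ∧
    ∀ g : ℕ → SimpleGraph V, IsPlay k r s G₀ g →
      ∀ n, Terminal k (g n) → P (g n)

/-- The player moving at steps `≡ r (mod 2)` has a strategy forcing the event that at some
stage the current graph satisfies `P`. -/
def Forces {V : Type} (k r : ℕ) (G₀ : SimpleGraph V) (P : SimpleGraph V → Prop) : Prop :=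
  ∃ s : SimpleGraph V → V × V, ValidStrategy k s ∧
    ∀ g : ℕ → SimpleGraph V, IsPlay k r s G₀ g → ∃ n, P (g n)

end GraphGame

namespace GraphGame

section Machine

set_option linter.unusedSectionVars false

open Finset Classical

variable {W : Type} [Fintype W]

/-! ### Basic notions -/

/-- The vertex set of the component of `r` in `G`. -/
noncomputable def comp (G : SimpleGraph W) (r : W) : Finset W :=
  univ.filter (fun v => G.Reachable r v)

/-- The total free valency of `A`: the number of edge ends that can still be added at vertices
of `A`. -/
noncomputable def stubs (G : SimpleGraph W) (A : Finset W) : ℕ :=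
  ∑ v ∈ A, (3 - deg G v)

/-- A nonempty proper set `A` of vertices has at most one edge end missing from being
`3`-regular in itself, so at most one edge leaves `A` in every later position. -/
def Win (G : SimpleGraph W) : Prop :=
  ∃ A : Finset W, A.Nonempty ∧ A ≠ univ ∧
    3 * A.card ≤ ∑ a ∈ A, (A.filter (G.Adj a)).card + 1

lemma deg_eq (G : SimpleGraph W) (v : W) : deg G v = (univ.filter (G.Adj v)).card := by
  unfold deg
  rw [← Set.ncard_coe_finset]
  congr 1
  ext w
  simp

lemma addEdge_adj (G : SimpleGraph W) {u v : W} (huv : u ≠ v) (a b : W) :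
    (addEdge G u v).Adj a b ↔ G.Adj a b ∨ (a = u ∧ b = v) ∨ (a = v ∧ b = u) := by
  unfold addEdge
  simp only [SimpleGraph.sup_adj, SimpleGraph.fromEdgeSet_adj, Set.mem_singleton_iff,
    Sym2.eq_iff, ne_eq]
  constructor
  · rintro (h | ⟨h, -⟩)
    · exact Or.inl h
    · exact Or.inr h
  · rintro (h | h)
    · exact Or.inl h
    · refine Or.inr ⟨h, ?_⟩
      rintro rfl
      rcases h with ⟨rfl, rfl⟩ | ⟨rfl, rfl⟩ <;> exact huv rfl

lemma addEdge_comm (G : SimpleGraph W) (u v : W) : addEdge G u v = addEdge G v u := by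
  unfold addEdge
  rw [Sym2.eq_swap]

lemma le_addEdge (G : SimpleGraph W) (u v : W) : G ≤ addEdge G u v := le_sup_left

lemma deg_addEdge (G : SimpleGraph W) {u v : W} (huv : u ≠ v) (hn : ¬ G.Adj u v) (w : W) :
    deg (addEdge G u v) w
      = deg G w + (if w = u then 1 else 0) + (if w = v then 1 else 0) := by
  rw [deg_eq, deg_eq]
  by_cases h1 : w = u
  · subst h1
    have : univ.filter ((addEdge G w v).Adj w) = insert v (univ.filter (G.Adj w)) := by
      ext x
      simp only [mem_filter, mem_univ, true_and, addEdge_adj G huv, mem_insert]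
      constructor
      · rintro (h | h | h)
        · exact Or.inr h
        · exact Or.inl h
        · exact absurd h.1 huv
      · rintro (h | h)
        · exact Or.inr (Or.inl h)
        · exact Or.inl h
    rw [this, card_insert_of_notMem (by simpa using hn)]
    simp [huv]
  · by_cases h2 : w = v
    · subst h2
      have : univ.filter ((addEdge G u w).Adj w) = insert u (univ.filter (G.Adj w)) := by
        ext x
        simp only [mem_filter, mem_univ, true_and, addEdge_adj G huv, mem_insert]
        constructor
        · rintro (h | h | h)
          · exact Or.inr h
          · exact absurd h.1 h1
          · exact Or.inl h
        · rintro (h | h)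
          · exact Or.inr (Or.inr h)
          · exact Or.inl h
      rw [this, card_insert_of_notMem (by simpa [G.adj_comm] using hn)]
      simp [h1]
    · have : univ.filter ((addEdge G u v).Adj w) = univ.filter (G.Adj w) := by
        ext x
        simp [addEdge_adj G huv, h1, h2]
      rw [this]
      simp [h1, h2]

lemma LegalMove.symm {G : SimpleGraph W} {u v : W} (h : LegalMove 3 G u v) :
    LegalMove 3 G v u :=
  ⟨h.1.symm, fun h' => h.2.1 h'.symm, by rw [addEdge_comm]; exact h.2.2⟩

lemma LegalMove.deg_left {G : SimpleGraph W} {u v : W} (h : LegalMove 3 G u v) :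
    deg G u ≤ 2 := by
  have := h.2.2 u
  rw [deg_addEdge G h.1 h.2.1] at this
  simp at this
  omega

lemma LegalMove.deg_right {G : SimpleGraph W} {u v : W} (h : LegalMove 3 G u v) :
    deg G v ≤ 2 := h.symm.deg_left

lemma legal_of {G : SimpleGraph W} (hd : ∀ w, deg G w ≤ 3) {u v : W} (huv : u ≠ v)
    (hn : ¬ G.Adj u v) (hu : deg G u ≤ 2) (hv : deg G v ≤ 2) : LegalMove 3 G u v := by
  refine ⟨huv, hn, fun w => ?_⟩
  rw [deg_addEdge G huv hn]
  have := hd w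
  split_ifs with h1 h2 h2
  · exact absurd (h1.symm.trans h2) huv
  · subst h1; omega
  · subst h2; omega
  · omega

lemma Win.mono {G H : SimpleGraph W} (hGH : G ≤ H) (h : Win G) : Win H := by
  obtain ⟨A, h1, h2, h3⟩ := h
  refine ⟨A, h1, h2, h3.trans ?_⟩
  gcongr with a _ b
  exact fun h => hGH h

lemma sum_deg_split (G : SimpleGraph W) (A : Finset W) (a : W) :
    deg G a = (A.filter (G.Adj a)).card + (Aᶜ.filter (G.Adj a)).card := by
  rw [deg_eq, ← card_union_of_disjoint, ← filter_union, union_compl]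
  exact disjoint_filter_filter disjoint_compl_right

/-! ### Components -/

lemma mem_comp {G : SimpleGraph W} {r v : W} : v ∈ comp G r ↔ G.Reachable r v := by
  simp [comp]

lemma self_mem_comp (G : SimpleGraph W) (r : W) : r ∈ comp G r := mem_comp.2 (by rfl)

lemma comp_closed {G : SimpleGraph W} {r a b : W} (ha : a ∈ comp G r) (hab : G.Adj a b) :
    b ∈ comp G r := mem_comp.2 ((mem_comp.1 ha).trans hab.reachable)

/-- A set closed under adjacency that meets the component of `r` contains it. -/
lemma comp_subset {G : SimpleGraph W} {r x : W} {X : Finset W} (hx : x ∈ comp G r)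
    (hxX : x ∈ X) (hX : ∀ a ∈ X, ∀ b, G.Adj a b → b ∈ X) : comp G r ⊆ X := by
  intro v hv
  obtain ⟨p⟩ : G.Reachable x v := (mem_comp.1 hx).symm.trans (mem_comp.1 hv)
  clear hv hx
  induction p with
  | nil => exact hxX
  | cons h _ ih => exact ih (hX _ hxX _ h)

lemma comp_mono {G H : SimpleGraph W} (hGH : G ≤ H) (r : W) : comp G r ⊆ comp H r :=
  fun _ hv => mem_comp.2 ((mem_comp.1 hv).mono hGH)

lemma comp_addEdge_same {G : SimpleGraph W} {r u v : W} (huv : u ≠ v)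
    (h : u ∈ comp G r ↔ v ∈ comp G r) : comp (addEdge G u v) r = comp G r := by
  apply Subset.antisymm _ (comp_mono (le_addEdge G u v) r)
  apply comp_subset (self_mem_comp _ r) (self_mem_comp _ r)
  intro a ha b hab
  rcases (addEdge_adj G huv a b).1 hab with h1 | ⟨rfl, rfl⟩ | ⟨rfl, rfl⟩
  · exact comp_closed ha h1
  · exact h.1 ha
  · exact h.2 ha

lemma comp_addEdge_join {G : SimpleGraph W} {r u v : W} (huv : u ≠ v)
    (hu : u ∈ comp G r) : comp (addEdge G u v) r = comp G r ∪ comp G v := by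
  apply Subset.antisymm
  · apply comp_subset (self_mem_comp _ r) (mem_union_left _ (self_mem_comp _ r))
    intro a ha b hab
    rcases (addEdge_adj G huv a b).1 hab with h1 | ⟨rfl, rfl⟩ | ⟨rfl, rfl⟩
    · rcases mem_union.1 ha with h | h
      · exact mem_union_left _ (comp_closed h h1)
      · exact mem_union_right _ (comp_closed h h1)
    · exact mem_union_right _ (self_mem_comp _ _)
    · exact mem_union_left _ hu
  · apply union_subset (comp_mono (le_addEdge G u v) r)
    intro w hw
    have h1 : (addEdge G u v).Reachable r u := (mem_comp.1 hu).mono (le_addEdge G u v)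
    have h2 : (addEdge G u v).Adj u v := (addEdge_adj G huv u v).2 (Or.inr (Or.inl ⟨rfl, rfl⟩))
    exact mem_comp.2 ((h1.trans h2.reachable).trans ((mem_comp.1 hw).mono (le_addEdge G u v)))

lemma comp_disjoint {G : SimpleGraph W} {r v : W} (hv : v ∉ comp G r) :
    Disjoint (comp G r) (comp G v) := by
  rw [Finset.disjoint_left]
  intro a ha ha'
  exact hv (mem_comp.2 ((mem_comp.1 ha).trans (mem_comp.1 ha').symm))

lemma comp_isolated {G : SimpleGraph W} {x : W} (hx : deg G x = 0) : comp G x = {x} := by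
  apply Subset.antisymm
  · apply comp_subset (self_mem_comp G x) (mem_singleton_self x)
    intro a ha b hab
    rw [mem_singleton.1 ha] at hab
    rw [deg_eq, card_eq_zero] at hx
    have : b ∈ univ.filter (G.Adj x) := by simpa using hab
    rw [hx] at this
    simp at this
  · simpa using self_mem_comp G x

/-- A connected graph on `t` vertices has at least `t - 1` edges, stated for a component through
its degree sum. -/
lemma card_comp_le (G : SimpleGraph W) (r : W) :
    2 * (comp G r).card ≤ ∑ v ∈ comp G r, deg G v + 2 := by
  set C := G.connectedComponentMk r
  have hconn : (G.induce C.supp).Connected := C.connected_toSimpleGraph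
  have h1 := hconn.card_vert_le_card_edgeSet_add_one
  have h2 := (G.induce C.supp).sum_degrees_eq_twice_card_edges
  have hm : ∀ v, v ∈ C.supp ↔ v ∈ comp G r := by
    intro v
    rw [mem_comp, SimpleGraph.ConnectedComponent.mem_supp_iff, SimpleGraph.ConnectedComponent.eq]
    exact SimpleGraph.reachable_comm
  have h3 : Nat.card C.supp = (comp G r).card := by
    rw [Nat.card_eq_fintype_card, Fintype.card_of_subtype]
    exact fun x => (hm x).symm
  have h4 : ∑ v ∈ comp G r, deg G v = ∑ v : C.supp, (G.induce C.supp).degree v := by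
    rw [Finset.sum_subtype (comp G r) (fun x => (hm x).symm)]
    apply Finset.sum_congr rfl
    intro v _
    rw [deg_eq, ← SimpleGraph.card_neighborFinset_eq_degree]
    symm
    apply Finset.card_bij (fun (x : C.supp) _ => (x : W))
    · intro a ha
      simpa using ha
    · intro a _ b _ h
      exact Subtype.ext h
    · intro b hb
      have hb' : G.Adj v b := by simpa using hb
      exact ⟨⟨b, (hm b).2 (comp_closed ((hm v).1 v.2) hb')⟩, by simpa using hb', rfl⟩
  rw [h4, h2, ← h3]
  have h5 : Nat.card (G.induce C.supp).edgeSet = #(G.induce C.supp).edgeFinset := by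
    rw [Nat.card_eq_fintype_card, SimpleGraph.edgeFinset_card]
  omega


/-! ### Winning sets -/

lemma not_connected_of_closed {X : Type} {H : SimpleGraph X} (C : Set X) {x y : X}
    (hx : x ∈ C) (hy : y ∉ C) (hC : ∀ a ∈ C, ∀ b, H.Adj a b → b ∈ C) : ¬ H.Connected := by
  intro h
  obtain ⟨p⟩ := h.preconnected x y
  clear h
  induction p with
  | nil => exact hy hx
  | cons h _ ih => exact ih (hC _ hx _ h) hy

lemma Win.not_two_connected {G : SimpleGraph W} (hd : ∀ v, deg G v ≤ 3) (h : Win G) :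
    ¬ G.Connected ∨ ∃ v : W, ¬ (G.induce ({v}ᶜ : Set W)).Connected := by
  obtain ⟨A, ⟨x, hx⟩, hA, hc⟩ := h
  obtain ⟨y, hy⟩ : ∃ y, y ∉ A := by
    by_contra! hall
    exact hA (eq_univ_of_forall hall)
  have hsum : ∑ a ∈ A, (Aᶜ.filter (G.Adj a)).card ≤ 1 := by
    have h1 : ∑ a ∈ A, deg G a ≤ 3 * A.card := by
      have := Finset.sum_le_card_nsmul A (deg G) 3 (fun a _ => hd a)
      simpa [mul_comm] using this
    rw [Finset.sum_congr rfl (fun a _ => sum_deg_split G A a), sum_add_distrib] at h1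
    omega
  by_cases hcross : ∃ a ∈ A, ∃ b, b ∉ A ∧ G.Adj a b
  · obtain ⟨a, ha, b, hb, hab⟩ := hcross
    right
    refine ⟨a, ?_⟩
    have hother : ∀ a' ∈ A, a' ≠ a → ∀ b', G.Adj a' b' → b' ∈ A := by
      intro a' ha' hne b' hab'
      by_contra hb'
      have h2 : ∑ c ∈ ({a, a'} : Finset W), (Aᶜ.filter (G.Adj c)).card
          ≤ ∑ c ∈ A, (Aᶜ.filter (G.Adj c)).card := by
        apply Finset.sum_le_sum_of_subset
        intro c hc
        simp only [mem_insert, mem_singleton] at hc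
        rcases hc with rfl | rfl <;> assumption
      rw [Finset.sum_pair hne.symm] at h2
      have h3 : 0 < (Aᶜ.filter (G.Adj a)).card := card_pos.2 ⟨b, by simp [hb, hab]⟩
      have h4 : 0 < (Aᶜ.filter (G.Adj a')).card := card_pos.2 ⟨b', by simp [hb', hab']⟩
      omega
    obtain ⟨c, hcA, hca⟩ : ∃ c ∈ A, c ≠ a := by
      by_contra! hall
      have : A = {a} := by
        ext z
        simp only [mem_singleton]
        exact ⟨hall z, fun h => h ▸ ha⟩
      rw [this] at hc
      have h0 : ({a} : Finset W).filter (G.Adj a) = ∅ := by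
        ext z
        simp only [mem_filter, mem_singleton, notMem_empty, iff_false, not_and]
        rintro rfl
        exact G.irrefl
      simp [h0] at hc
    have hya : y ≠ a := fun h => hy (h ▸ ha)
    apply not_connected_of_closed (x := (⟨c, hca⟩ : ({a}ᶜ : Set W))) (y := ⟨y, hya⟩)
      {z : ({a}ᶜ : Set W) | (z : W) ∈ A} hcA hy
    intro p hp q hpq
    exact hother p hp p.2 q hpq
  · push Not at hcross
    left
    exact not_connected_of_closed (↑A) hx hy (fun a ha b hab => by
      by_contra hb
      exact hcross a ha b hb hab)

lemma not_connected_of_isolated {G : SimpleGraph W} {x y : W} (hx : deg G x = 0) (hxy : x ≠ y) :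
    ¬ G.Connected := by
  apply not_connected_of_closed (x := x) (y := y) {x} rfl hxy.symm
  intro a ha b hab
  have h := comp_closed (self_mem_comp G a) hab
  rw [Set.mem_singleton_iff.1 ha, comp_isolated hx] at h
  simpa using h

/-- `A` witnesses `Win` when its free valency and the number of edges leaving it add up to at
most one. -/
lemma win_of_boundary {G : SimpleGraph W} {A : Finset W} {y : W} (hA : A.Nonempty) (hy : y ∉ A)
    (h : stubs G A + ∑ a ∈ A, (Aᶜ.filter (G.Adj a)).card ≤ 1) : Win G := by
  refine ⟨A, hA, fun h' => hy (h' ▸ mem_univ y), ?_⟩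
  have h1 : 3 * A.card ≤ stubs G A + ∑ a ∈ A, deg G a := by
    unfold stubs
    rw [← sum_add_distrib, mul_comm, ← smul_eq_mul]
    apply Finset.card_nsmul_le_sum
    intro a _
    omega
  rw [Finset.sum_congr rfl (fun a _ => sum_deg_split G A a), sum_add_distrib] at h1
  omega

lemma win_of_stubs {G : SimpleGraph W} {r y : W} (hy : y ∉ comp G r)
    (h : stubs G (comp G r) ≤ 1) : Win G := by
  apply win_of_boundary ⟨r, self_mem_comp G r⟩ hy
  have : ∑ a ∈ comp G r, ((comp G r)ᶜ.filter (G.Adj a)).card = 0 := by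
    apply Finset.sum_eq_zero
    intro a ha
    rw [card_eq_zero, filter_eq_empty_iff]
    intro b hb hab
    exact (mem_compl.1 hb) (comp_closed ha hab)
  omega

/-- If all vertices of the component outside `B` are saturated and at most one edge joins them
to `B`, they form a winning set. -/
lemma win_of_bridge {G : SimpleGraph W} {r y : W} (hy : y ∉ comp G r) (B : Finset W)
    (hne : ∃ z ∈ comp G r, z ∉ B) (hsat : ∀ z ∈ comp G r, z ∉ B → 3 ≤ deg G z)
    (hb : ∀ a b a' b', a ∉ B → a' ∉ B → b ∈ B → b' ∈ B → G.Adj a b → G.Adj a' b' →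
      a = a' ∧ b = b') : Win G := by
  obtain ⟨z, hz, hzB⟩ := hne
  apply win_of_boundary (A := comp G r \ B) (y := y) ⟨z, by simp [hz, hzB]⟩ (by simp [hy])
  have h0 : stubs G (comp G r \ B) = 0 := by
    apply Finset.sum_eq_zero
    intro a ha
    rw [mem_sdiff] at ha
    have := hsat a ha.1 ha.2
    omega
  rw [h0, zero_add, ← card_sigma]
  rw [card_le_one]
  rintro ⟨a, b⟩ hab ⟨a', b'⟩ hab'
  simp only [mem_sigma, mem_sdiff, mem_filter, mem_compl, not_and, not_not] at hab hab'
  obtain ⟨h1, h2⟩ := hb a b a' b' hab.1.2 hab'.1.2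
    (hab.2.1 (comp_closed hab.1.1 hab.2.2)) (hab'.2.1 (comp_closed hab'.1.1 hab'.2.2))
    hab.2.2 hab'.2.2
  subst h1 h2
  rfl

lemma nbr_one {G : SimpleGraph W} {v a b : W} (hv : deg G v ≤ 1) (ha : G.Adj v a)
    (hb : G.Adj v b) : a = b := by
  rw [deg_eq, card_le_one] at hv
  exact hv a (by simpa using ha) b (by simpa using hb)

lemma nbr_two {G : SimpleGraph W} {v a b c : W} (hv : deg G v ≤ 2) (ha : G.Adj v a)
    (hb : G.Adj v b) (hc : G.Adj v c) : a = b ∨ a = c ∨ b = c := by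
  by_contra! h
  rw [deg_eq] at hv
  have h1 : ({a, b, c} : Finset W) ⊆ univ.filter (G.Adj v) := by
    intro x hx
    simp only [mem_insert, mem_singleton] at hx
    rcases hx with rfl | rfl | rfl <;> simpa
  have h2 := card_le_card h1
  rw [card_eq_three.2 ⟨a, b, c, h.1, h.2.1, h.2.2, rfl⟩] at h2
  omega

/-! ### The potential -/

/-- The sum of all degrees, that is, twice the number of edges. -/
noncomputable def totalDeg (G : SimpleGraph W) : ℕ := ∑ v, deg G v

/-- The potential of `G` with respect to the component of `r`: twice the free valency of the
component plus the total degree outside it. -/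
noncomputable def pot (G : SimpleGraph W) (r : W) : ℕ :=
  2 * stubs G (comp G r) + ∑ v ∈ (comp G r)ᶜ, deg G v

lemma sum_deg_addEdge {G : SimpleGraph W} {u v : W} (huv : u ≠ v) (hn : ¬ G.Adj u v)
    (A : Finset W) : ∑ w ∈ A, deg (addEdge G u v) w
      = ∑ w ∈ A, deg G w + (if u ∈ A then 1 else 0) + (if v ∈ A then 1 else 0) := by
  simp only [deg_addEdge G huv hn, sum_add_distrib, Finset.sum_ite_eq']

lemma totalDeg_addEdge {G : SimpleGraph W} {u v : W} (h : LegalMove 3 G u v) :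
    totalDeg (addEdge G u v) = totalDeg G + 2 := by
  unfold totalDeg
  rw [sum_deg_addEdge h.1 h.2.1]
  simp

lemma stubs_add_sum {G : SimpleGraph W} (hd : ∀ v, deg G v ≤ 3) (A : Finset W) :
    stubs G A + ∑ a ∈ A, deg G a = 3 * A.card := by
  unfold stubs
  rw [← sum_add_distrib, Finset.sum_congr rfl (fun a _ => Nat.sub_add_cancel (hd a))]
  simp [mul_comm]

lemma stubs_addEdge {G : SimpleGraph W} {u v : W} (h : LegalMove 3 G u v)
    (hd : ∀ v, deg G v ≤ 3) (A : Finset W) :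
    stubs (addEdge G u v) A + (if u ∈ A then 1 else 0) + (if v ∈ A then 1 else 0)
      = stubs G A := by
  have h1 := stubs_add_sum hd A
  have h2 := stubs_add_sum h.2.2 A
  rw [sum_deg_addEdge h.1 h.2.1] at h2
  omega

lemma pot_inside {G : SimpleGraph W} {r u v : W} (h : LegalMove 3 G u v)
    (hd : ∀ v, deg G v ≤ 3) (hu : u ∈ comp G r) (hv : v ∈ comp G r) :
    pot (addEdge G u v) r + 4 = pot G r := by
  have h1 := stubs_addEdge h hd (comp G r)
  unfold pot
  rw [comp_addEdge_same h.1 (by simp [hu, hv]), sum_deg_addEdge h.1 h.2.1]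
  simp only [hu, hv, if_true, mem_compl, not_true_eq_false, if_false] at h1 ⊢
  omega

lemma pot_outside {G : SimpleGraph W} {r u v : W} (h : LegalMove 3 G u v)
    (hd : ∀ v, deg G v ≤ 3) (hu : u ∉ comp G r) (hv : v ∉ comp G r) :
    pot (addEdge G u v) r = pot G r + 2 := by
  have h1 := stubs_addEdge h hd (comp G r)
  unfold pot
  rw [comp_addEdge_same h.1 (by simp [hu, hv]), sum_deg_addEdge h.1 h.2.1]
  simp only [hu, hv, if_true, mem_compl, not_false_eq_true, if_false] at h1 ⊢
  omega

lemma stubs_attach {G : SimpleGraph W} {r u v : W} (h : LegalMove 3 G u v)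
    (hd : ∀ v, deg G v ≤ 3) (hu : u ∈ comp G r) (hv : v ∉ comp G r) :
    stubs (addEdge G u v) (comp (addEdge G u v) r) + 2
      = stubs G (comp G r) + stubs G (comp G v) := by
  have h1 := stubs_addEdge h hd (comp G r ∪ comp G v)
  rw [comp_addEdge_join h.1 hu]
  simp only [mem_union, hu, self_mem_comp, true_or, or_true, if_true] at h1
  have h2 : stubs G (comp G r ∪ comp G v) = stubs G (comp G r) + stubs G (comp G v) :=
    sum_union (comp_disjoint hv)
  omega

/-- Attaching a component with `t` vertices and degree sum `d` changes the potential by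
`6 * t - 3 * d - 4`, and `2 * t ≤ d + 2`. -/
lemma pot_attach {G : SimpleGraph W} {r u v : W} (h : LegalMove 3 G u v)
    (hd : ∀ v, deg G v ≤ 3) (hu : u ∈ comp G r) (hv : v ∉ comp G r) :
    pot (addEdge G u v) r ≤ pot G r + 2 := by
  have h1 := stubs_attach h hd hu hv
  have h2 := stubs_add_sum hd (comp G v)
  have h3 := card_comp_le G v
  have h4 : ∑ w ∈ (comp (addEdge G u v) r)ᶜ, deg (addEdge G u v) w + ∑ w ∈ comp G v, deg G w
      = ∑ w ∈ (comp G r)ᶜ, deg G w := by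
    rw [comp_addEdge_join h.1 hu, sum_deg_addEdge h.1 h.2.1]
    simp only [mem_compl, mem_union, hu, self_mem_comp, true_or, or_true, not_true_eq_false,
      if_false, add_zero]
    rw [← sum_union]
    · congr 1
      ext w
      have hdj := Finset.disjoint_left.1 (comp_disjoint hv)
      have := @hdj w
      simp only [mem_union, mem_compl]
      tauto
    · rw [Finset.disjoint_left]
      intro w
      simp only [mem_union, mem_compl]
      tauto
  unfold pot
  omega

lemma pot_le {G : SimpleGraph W} (hd : ∀ v, deg G v ≤ 3) (r : W) :
    pot G r ≤ totalDeg G + 6 := by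
  have h1 := stubs_add_sum hd (comp G r)
  have h2 := card_comp_le G r
  have h3 := Finset.sum_add_sum_compl (comp G r) (deg G)
  unfold pot totalDeg
  omega

/-! ### Ones and twos -/

/-- The vertices of degree two in the component of `r`; they have free valency one. -/
noncomputable def ones (G : SimpleGraph W) (r : W) : Finset W :=
  (comp G r).filter (fun v => deg G v = 2)

/-- The vertices of degree one in the component of `r`; they have free valency two. -/
noncomputable def twos (G : SimpleGraph W) (r : W) : Finset W :=
  (comp G r).filter (fun v => deg G v = 1)

/-- A position of the game (all degrees at most three) in which the component of `r` has at
least four vertices. -/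
structure Big (G : SimpleGraph W) (r : W) : Prop where
  deg_le : ∀ v, deg G v ≤ 3
  card_ge : 4 ≤ (comp G r).card

lemma mem_ones {G : SimpleGraph W} {r v : W} : v ∈ ones G r ↔ v ∈ comp G r ∧ deg G v = 2 := by
  simp [ones]

lemma mem_twos {G : SimpleGraph W} {r v : W} : v ∈ twos G r ↔ v ∈ comp G r ∧ deg G v = 1 := by
  simp [twos]

/-- A set closed under adjacency that meets the component of `r` has at least four elements.
The forbidden configurations of unsaturated vertices below would all be smaller closed sets. -/
lemma Big.no_small {G : SimpleGraph W} {r x : W} (h : Big G r) {X : Finset W}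
    (hx : x ∈ comp G r) (hxX : x ∈ X) (hX : ∀ a ∈ X, ∀ b, G.Adj a b → b ∈ X) :
    4 ≤ X.card :=
  h.card_ge.trans (card_le_card (comp_subset hx hxX hX))

lemma Big.deg_pos {G : SimpleGraph W} {r v : W} (h : Big G r) (hv : v ∈ comp G r) :
    1 ≤ deg G v := by
  by_contra h0
  have h0' : deg G v = 0 := by omega
  have := h.no_small (X := {v}) hv (mem_singleton_self v) (by
    intro a ha b hab
    rw [mem_singleton.1 ha] at hab
    have := comp_closed (self_mem_comp G v) hab
    rwa [comp_isolated h0'] at this)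
  simp at this

lemma Big.mem_or {G : SimpleGraph W} {r v : W} (h : Big G r) (hv : v ∈ comp G r)
    (hd : deg G v ≤ 2) : v ∈ ones G r ∨ v ∈ twos G r := by
  have := h.deg_pos hv
  rw [mem_ones, mem_twos]
  have : deg G v = 2 ∨ deg G v = 1 := by omega
  tauto

lemma ones_not_twos {G : SimpleGraph W} {r v : W} (hv : v ∈ ones G r) : v ∉ twos G r := by
  rw [mem_ones] at hv
  rw [mem_twos]
  omega

lemma Big.stubs_eq {G : SimpleGraph W} {r : W} (h : Big G r) :
    stubs G (comp G r) = (ones G r).card + 2 * (twos G r).card := by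
  unfold stubs ones twos
  rw [card_filter, card_filter, mul_sum, ← sum_add_distrib]
  apply Finset.sum_congr rfl
  intro v hv
  have h1 := h.deg_pos hv
  have h2 := h.deg_le v
  split_ifs <;> omega

lemma Big.add_edge {G : SimpleGraph W} {r u v : W} (h : Big G r) (hl : LegalMove 3 G u v) :
    Big (addEdge G u v) r :=
  ⟨hl.2.2, h.card_ge.trans (card_le_card (comp_mono (le_addEdge G u v) r))⟩

lemma Big.twos_indep {G : SimpleGraph W} {r x y : W} (h : Big G r) (hx : x ∈ twos G r)
    (hy : y ∈ twos G r) : ¬ G.Adj x y := by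
  intro hxy
  rw [mem_twos] at hx hy
  have := h.no_small (X := {x, y}) hx.1 (by simp) (by
    intro a ha b hab
    simp only [mem_insert, mem_singleton] at ha ⊢
    rcases ha with rfl | rfl
    · exact Or.inr (nbr_one hx.2.le hab hxy)
    · exact Or.inl (nbr_one hy.2.le hab hxy.symm))
  have := card_le_two (a := x) (b := y)
  omega

lemma Big.no_triangle {G : SimpleGraph W} {r x y z : W} (h : Big G r) (hx : x ∈ comp G r)
    (dx : deg G x ≤ 2) (dy : deg G y ≤ 2) (dz : deg G z ≤ 2)
    (hxy : G.Adj x y) (hyz : G.Adj y z) (hxz : G.Adj x z) : False := by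
  have h1 := hxy.ne
  have h2 := hyz.ne
  have h3 := hxz.ne
  have := h.no_small (X := {x, y, z}) hx (by simp) (by
    intro a ha b hab
    simp only [mem_insert, mem_singleton] at ha ⊢
    rcases ha with rfl | rfl | rfl
    · have := nbr_two dx hab hxy hxz
      tauto
    · have := nbr_two dy hab hxy.symm hyz
      tauto
    · have := nbr_two dz hab hxz.symm hyz.symm
      tauto)
  have := card_le_three (a := x) (b := y) (c := z)
  omega

lemma Big.no_cherry {G : SimpleGraph W} {r x y c : W} (h : Big G r) (hx : x ∈ twos G r)
    (hy : y ∈ twos G r) (hxy : x ≠ y) (dc : deg G c ≤ 2) (h1 : G.Adj c x) (h2 : G.Adj c y) :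
    False := by
  rw [mem_twos] at hx hy
  have := h.no_small (X := {c, x, y}) hx.1 (by simp) (by
    intro a ha b hab
    simp only [mem_insert, mem_singleton] at ha ⊢
    rcases ha with rfl | rfl | rfl
    · have := nbr_two dc hab h1 h2
      tauto
    · exact Or.inl (nbr_one hx.2.le hab h1.symm)
    · exact Or.inl (nbr_one hy.2.le hab h2.symm))
  have := card_le_three (a := c) (b := x) (c := y)
  omega

section Inside

variable {G : SimpleGraph W} {r p q : W}

lemma inside11 (hl : LegalMove 3 G p q) (hp : p ∈ ones G r) (hq : q ∈ ones G r) :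
    ones (addEdge G p q) r = ((ones G r).erase p).erase q ∧
      twos (addEdge G p q) r = twos G r := by
  have hc : comp (addEdge G p q) r = comp G r :=
    comp_addEdge_same hl.1 (by simp [(mem_ones.1 hp).1, (mem_ones.1 hq).1])
  have h1 := (mem_ones.1 hp).2
  have h2 := (mem_ones.1 hq).2
  have h3 := hl.1
  constructor
  · ext v
    simp only [mem_erase, mem_ones, hc, deg_addEdge G hl.1 hl.2.1]
    grind
  · ext v
    simp only [mem_twos, hc, deg_addEdge G hl.1 hl.2.1]
    grind

lemma inside12 (hl : LegalMove 3 G p q) (hp : p ∈ ones G r) (hq : q ∈ twos G r) :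
    ones (addEdge G p q) r = insert q ((ones G r).erase p) ∧
      twos (addEdge G p q) r = (twos G r).erase q := by
  have hc : comp (addEdge G p q) r = comp G r :=
    comp_addEdge_same hl.1 (by simp [(mem_ones.1 hp).1, (mem_twos.1 hq).1])
  have h0 := (mem_twos.1 hq).1
  have h1 := (mem_ones.1 hp).2
  have h2 := (mem_twos.1 hq).2
  have h3 := hl.1
  constructor
  · ext v
    simp only [mem_insert, mem_erase, mem_ones, hc, deg_addEdge G hl.1 hl.2.1]
    grind
  · ext v
    simp only [mem_erase, mem_twos, hc, deg_addEdge G hl.1 hl.2.1]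
    grind

lemma inside22 (hl : LegalMove 3 G p q) (hp : p ∈ twos G r) (hq : q ∈ twos G r) :
    ones (addEdge G p q) r = insert p (insert q (ones G r)) ∧
      twos (addEdge G p q) r = ((twos G r).erase p).erase q := by
  have hc : comp (addEdge G p q) r = comp G r :=
    comp_addEdge_same hl.1 (by simp [(mem_twos.1 hp).1, (mem_twos.1 hq).1])
  have h0 := (mem_twos.1 hq).1
  have h0' := (mem_twos.1 hp).1
  have h1 := (mem_twos.1 hp).2
  have h2 := (mem_twos.1 hq).2
  have h3 := hl.1
  constructor
  · ext v
    simp only [mem_insert, mem_ones, hc, deg_addEdge G hl.1 hl.2.1]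
    grind
  · ext v
    simp only [mem_erase, mem_twos, hc, deg_addEdge G hl.1 hl.2.1]
    grind

lemma card11 (hl : LegalMove 3 G p q) (hp : p ∈ ones G r) (hq : q ∈ ones G r) :
    (ones (addEdge G p q) r).card + 2 = (ones G r).card ∧
      (twos (addEdge G p q) r).card = (twos G r).card := by
  obtain ⟨h1, h2⟩ := inside11 hl hp hq
  rw [h1, h2]
  have h3 := card_erase_add_one hp
  have h4 : q ∈ (ones G r).erase p := mem_erase.2 ⟨hl.1.symm, hq⟩
  have h5 := card_erase_add_one h4
  omega

lemma card12 (hl : LegalMove 3 G p q) (hp : p ∈ ones G r) (hq : q ∈ twos G r) :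
    (ones (addEdge G p q) r).card = (ones G r).card ∧
      (twos (addEdge G p q) r).card + 1 = (twos G r).card := by
  obtain ⟨h1, h2⟩ := inside12 hl hp hq
  rw [h1, h2]
  have h3 := card_erase_add_one hp
  have h5 := card_erase_add_one hq
  have h6 : q ∉ (ones G r).erase p := fun h => ones_not_twos (mem_of_mem_erase h) hq
  rw [card_insert_of_notMem h6]
  omega

lemma card22 (hl : LegalMove 3 G p q) (hp : p ∈ twos G r) (hq : q ∈ twos G r) :
    (ones (addEdge G p q) r).card = (ones G r).card + 2 ∧
      (twos (addEdge G p q) r).card + 2 = (twos G r).card := by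
  obtain ⟨h1, h2⟩ := inside22 hl hp hq
  rw [h1, h2]
  have h3 := card_erase_add_one hp
  have h4 : q ∈ (twos G r).erase p := mem_erase.2 ⟨hl.1.symm, hq⟩
  have h5 := card_erase_add_one h4
  have h6 : q ∉ ones G r := fun h => ones_not_twos h hq
  have h7 : p ∉ insert q (ones G r) := by
    rw [mem_insert]
    rintro (h | h)
    · exact hl.1 h
    · exact ones_not_twos h hp
  rw [card_insert_of_notMem h7, card_insert_of_notMem h6]
  omega

end Inside

/-! ### Replies of the opponent -/

/-- The unsaturated vertices of the component are two ones, adjacent to each other. -/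
def IsQ (G : SimpleGraph W) (r : W) : Prop :=
  ∃ u v, G.Adj u v ∧ ones G r = {u, v} ∧ twos G r = ∅

/-- The unsaturated vertices of the component are two twos. -/
def IsFat (G : SimpleGraph W) (r : W) : Prop :=
  (ones G r).card = 0 ∧ (twos G r).card = 2

/-- The unsaturated vertices of the component are six ones. -/
def IsSix (G : SimpleGraph W) (r : W) : Prop :=
  (ones G r).card = 6 ∧ (twos G r).card = 0

lemma IsQ.card {G : SimpleGraph W} {r : W} (h : IsQ G r) :
    (ones G r).card = 2 ∧ (twos G r).card = 0 := by
  obtain ⟨u, v, h1, h2, h3⟩ := h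
  rw [h2, h3, card_pair h1.ne]
  simp

lemma exists_unsat {G : SimpleGraph W} {A : Finset W} (h : 0 < stubs G A) :
    ∃ a ∈ A, deg G a ≤ 2 := by
  by_contra! h'
  have : stubs G A = 0 := Finset.sum_eq_zero (fun a ha => by have := h' a ha; omega)
  omega

/-- If the only unsaturated vertex of the component is a leaf, removing that leaf leaves a
winning set. -/
lemma win_of_pendant {G : SimpleGraph W} {r u y : W} (hB : Big G r) (hy : y ∉ comp G r)
    (hdu : deg G u ≤ 1) (hsat : ∀ z ∈ comp G r, z ≠ u → 3 ≤ deg G z) : Win G := by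
  refine win_of_bridge hy {u} ?_ (fun z hz hzu => hsat z hz (by simpa using hzu)) ?_
  · by_contra! h
    have := card_le_card (show comp G r ⊆ {u} from h)
    have := hB.card_ge
    simp at *
    omega
  · intro a b a' b' _ _ hb hb' hab hab'
    rw [mem_singleton] at hb hb'
    subst hb hb'
    exact ⟨nbr_one hdu hab.symm hab'.symm, rfl⟩

/-- The effect of joining `S`, the component of `r`, to another component `T`. Both have free
valency at least two before, hence at least one unsaturated vertex each after the move. So in a new
position `IsQ` the adjacent ones lie on both sides and are joined by the new edge; then the only
unsaturated vertex of `S` was a leaf. In a new position `IsFat` one of the two twos lies in `S`. -/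
lemma reply_attach {G : SimpleGraph W} {r u v : W} (hB : Big G r) (hW : ¬ Win G)
    (hl : LegalMove 3 G u v) (hu : u ∈ comp G r) (hv : v ∉ comp G r) :
    ¬ IsQ (addEdge G u v) r ∧
    (IsFat (addEdge G u v) r → (ones G r).card = 1 ∧ (twos G r).card = 1) ∧
    (twos G r).card ≤ (twos (addEdge G u v) r).card + 1 := by
  have hB' := hB.add_edge hl
  have hdj := Finset.disjoint_left.1 (comp_disjoint hv)
  have hcomp := comp_addEdge_join (r := r) hl.1 hu
  have hsS : 2 ≤ stubs G (comp G r) := by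
    by_contra h
    exact hW (win_of_stubs hv (by omega))
  have hsT : 2 ≤ stubs G (comp G v) := by
    by_contra h
    exact hW (win_of_stubs (hdj (self_mem_comp G r)) (by omega))
  have hvT := self_mem_comp G v
  have huT : u ∉ comp G v := hdj hu
  have hsS' : stubs (addEdge G u v) (comp G r) + 1 = stubs G (comp G r) := by
    have := stubs_addEdge hl hB.deg_le (comp G r)
    simpa [hu, hv] using this
  have hsT' : stubs (addEdge G u v) (comp G v) + 1 = stubs G (comp G v) := by
    have := stubs_addEdge hl hB.deg_le (comp G v)
    simpa [huT, hvT] using this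
  obtain ⟨s, hsm, hsd⟩ := exists_unsat (show 0 < stubs (addEdge G u v) (comp G r) by omega)
  obtain ⟨t, htm, htd⟩ := exists_unsat (show 0 < stubs (addEdge G u v) (comp G v) by omega)
  have hs' : s ∈ comp (addEdge G u v) r := by rw [hcomp]; exact mem_union_left _ hsm
  have ht' : t ∈ comp (addEdge G u v) r := by rw [hcomp]; exact mem_union_right _ htm
  have hso := hB'.mem_or hs' hsd
  have hto := hB'.mem_or ht' htd
  have hst : s ≠ t := fun h => hdj hsm (h ▸ htm)
  refine ⟨?_, ?_, ?_⟩
  · rintro ⟨a, b, hab, h1, h2⟩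
    rw [h1, h2] at hso hto
    simp only [mem_insert, mem_singleton, notMem_empty, or_false] at hso hto
    -- the edge `ab` joins the two old components, so it is the new edge
    have hnew : (u = a ∧ v = b) ∨ (u = b ∧ v = a) := by
      rcases (addEdge_adj G hl.1 a b).1 hab with h | h | h
      · exfalso
        rcases hso with rfl | rfl <;> rcases hto with rfl | rfl
        · exact hst rfl
        · exact hdj (comp_closed hsm h) htm
        · exact hdj (comp_closed hsm h.symm) htm
        · exact hst rfl
      · exact Or.inl ⟨h.1.symm, h.2.symm⟩
      · exact Or.inr ⟨h.2.symm, h.1.symm⟩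
    have huo : u ∈ ones (addEdge G u v) r := by
      rw [h1, mem_insert, mem_singleton]
      tauto
    have hdu : deg G u = 1 := by
      have := (mem_ones.1 huo).2
      rw [deg_addEdge G hl.1 hl.2.1] at this
      simpa [hl.1] using this
    apply hW
    apply win_of_pendant hB hv hdu.le
    intro z hz hzu
    by_contra hzd
    have hzv : z ≠ v := fun h => hv (h ▸ hz)
    have hzm := hB'.mem_or (v := z) (by rw [hcomp]; exact mem_union_left _ hz) (by
      rw [deg_addEdge G hl.1 hl.2.1]
      simp only [hzu, hzv, if_false]
      omega)
    rw [h1, h2] at hzm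
    simp only [mem_insert, mem_singleton, notMem_empty, or_false] at hzm
    rcases hnew with ⟨rfl, rfl⟩ | ⟨rfl, rfl⟩ <;> tauto
  · rintro ⟨h1, h2⟩
    have h3 := hB'.stubs_eq
    have h3' := stubs_attach hl hB.deg_le hu hv
    rw [h1, h2] at h3
    rw [card_eq_zero] at h1
    rw [h1] at hso hto
    simp only [notMem_empty, false_or, mem_twos] at hso hto
    have h4 : 3 - deg (addEdge G u v) s ≤ stubs (addEdge G u v) (comp G r) :=
      single_le_sum (f := fun w => 3 - deg (addEdge G u v) w) (fun _ _ => Nat.zero_le _) hsm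
    have h5 : 3 - deg (addEdge G u v) t ≤ stubs (addEdge G u v) (comp G v) :=
      single_le_sum (f := fun w => 3 - deg (addEdge G u v) w) (fun _ _ => Nat.zero_le _) htm
    have h6 := hB.stubs_eq
    have h7 : s ∈ twos G r := by
      rw [mem_twos]
      have := hso.2
      rw [deg_addEdge G hl.1 hl.2.1] at this
      have := hB.deg_pos hsm
      exact ⟨hsm, by omega⟩
    have h8 := card_pos.2 ⟨s, h7⟩
    omega
  · have : (twos G r).erase u ⊆ twos (addEdge G u v) r := by
      intro z hz
      rw [mem_erase, mem_twos] at hz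
      have hzv : z ≠ v := fun h => hv (h ▸ hz.2.1)
      rw [mem_twos, hcomp, deg_addEdge G hl.1 hl.2.1]
      simp [hz.1, hzv, hz.2.1, hz.2.2]
    have h1 := card_le_card this
    have h2 := Finset.pred_card_le_card_erase (s := twos G r) (a := u)
    omega

lemma reply_outside {G : SimpleGraph W} {r u v : W}
    (hl : LegalMove 3 G u v) (hu : u ∉ comp G r) (hv : v ∉ comp G r) :
    ones (addEdge G u v) r = ones G r ∧ twos (addEdge G u v) r = twos G r ∧
    (IsQ (addEdge G u v) r → IsQ G r) := by
  have hc : comp (addEdge G u v) r = comp G r := comp_addEdge_same hl.1 (by simp [hu, hv])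
  have h1 : ones (addEdge G u v) r = ones G r := by
    ext z
    simp only [mem_ones, hc, deg_addEdge G hl.1 hl.2.1]
    grind
  have h2 : twos (addEdge G u v) r = twos G r := by
    ext z
    simp only [mem_twos, hc, deg_addEdge G hl.1 hl.2.1]
    grind
  refine ⟨h1, h2, ?_⟩
  rintro ⟨a, b, hab, h3, h4⟩
  refine ⟨a, b, ?_, h1 ▸ h3, h2 ▸ h4⟩
  have ha : a ∈ comp G r := (mem_ones.1 (h1 ▸ h3 ▸ mem_insert_self a {b} : a ∈ ones G r)).1
  rcases (addEdge_adj G hl.1 a b).1 hab with h | ⟨rfl, rfl⟩ | ⟨rfl, rfl⟩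
  · exact h
  · exact absurd ha hu
  · exact absurd ha hv

/-- Case distinction on a move: inside the component of `r`, from it to the outside, or
outside. -/
lemma legal_induct {G : SimpleGraph W} {r : W} {P : SimpleGraph W → Prop}
    (h1 : ∀ u v, LegalMove 3 G u v → u ∈ comp G r → v ∈ comp G r → P (addEdge G u v))
    (h2 : ∀ u v, LegalMove 3 G u v → u ∈ comp G r → v ∉ comp G r → P (addEdge G u v))
    (h3 : ∀ u v, LegalMove 3 G u v → u ∉ comp G r → v ∉ comp G r → P (addEdge G u v))
    (u v : W) (hl : LegalMove 3 G u v) : P (addEdge G u v) := by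
  by_cases hu : u ∈ comp G r <;> by_cases hv : v ∈ comp G r
  · exact h1 u v hl hu hv
  · exact h2 u v hl hu hv
  · rw [addEdge_comm]
    exact h2 v u hl.symm hv hu
  · exact h3 u v hl hu hv

/-- Case distinction on a move inside the component by the free valencies of its ends. -/
lemma internal_induct {G : SimpleGraph W} {r : W} (hB : Big G r) {P : SimpleGraph W → Prop}
    (h11 : ∀ u v, LegalMove 3 G u v → u ∈ ones G r → v ∈ ones G r → P (addEdge G u v))
    (h12 : ∀ u v, LegalMove 3 G u v → u ∈ ones G r → v ∈ twos G r → P (addEdge G u v))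
    (h22 : ∀ u v, LegalMove 3 G u v → u ∈ twos G r → v ∈ twos G r → P (addEdge G u v))
    (u v : W) (hl : LegalMove 3 G u v) (hu : u ∈ comp G r) (hv : v ∈ comp G r) :
    P (addEdge G u v) := by
  rcases hB.mem_or hu hl.deg_left with h1 | h1 <;> rcases hB.mem_or hv hl.deg_right with h2 | h2
  · exact h11 u v hl h1 h2
  · exact h12 u v hl h1 h2
  · rw [addEdge_comm]
    exact h12 v u hl.symm h2 h1
  · exact h22 u v hl h1 h2

/-- A condition on positions with the opponent to move under which no reply leads to `IsQ` or
`IsFat` (`safe_reply`). Only the six listed pairs of numbers of ones and twos are dangerous, and three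
of them are harmless under the stated adjacency conditions. -/
def Safe (G : SimpleGraph W) (r : W) : Prop :=
  (¬ ((ones G r).card = 0 ∧ (twos G r).card = 2) ∧
    ¬ ((ones G r).card = 1 ∧ (twos G r).card = 1) ∧
    ¬ ((ones G r).card = 2 ∧ (twos G r).card = 0) ∧
    ¬ ((ones G r).card = 2 ∧ (twos G r).card = 1) ∧
    ¬ ((ones G r).card = 2 ∧ (twos G r).card = 2) ∧
    ¬ ((ones G r).card = 4 ∧ (twos G r).card = 0)) ∨
  ((ones G r).card = 2 ∧ (twos G r).card = 0 ∧ ∀ u ∈ ones G r, ∀ v ∈ ones G r, ¬ G.Adj u v) ∨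
  ((ones G r).card = 2 ∧ (twos G r).card = 1 ∧ ∀ u ∈ ones G r, ∀ v ∈ twos G r, ¬ G.Adj u v) ∨
  ((ones G r).card = 2 ∧ (twos G r).card = 2 ∧
    ∀ u ∈ ones G r, ∀ v ∈ ones G r, u ≠ v → G.Adj u v)

lemma safe_reply {G : SimpleGraph W} {r : W} (hB : Big G r) (hW : ¬ Win G) (hs : Safe G r)
    (u v : W) (hl : LegalMove 3 G u v) :
    ¬ IsQ (addEdge G u v) r ∧ ¬ IsFat (addEdge G u v) r ∧
      pot (addEdge G u v) r ≤ pot G r + 2 := by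
  revert u v hl
  refine legal_induct (P := fun H => ¬ IsQ H r ∧ ¬ IsFat H r ∧ pot H r ≤ pot G r + 2)
    (r := r) ?_ ?_ ?_
  · intro u v hl hu hv
    have hp := pot_inside hl hB.deg_le hu hv
    have : ¬ IsQ (addEdge G u v) r ∧ ¬ IsFat (addEdge G u v) r := by
      refine internal_induct hB (P := fun H => ¬ IsQ H r ∧ ¬ IsFat H r) ?_ ?_ ?_ u v hl hu hv
      · intro u v hl hu hv
        have hc := card11 hl hu hv
        refine ⟨fun hQ => ?_, fun hF => ?_⟩
        · have := hQ.card
          unfold Safe at hs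
          omega
        · unfold IsFat at hF
          have hadj : (ones G r).card = 2 ∧ (twos G r).card = 2 := by omega
          rcases hs with hs | hs | hs | hs
          · omega
          · omega
          · omega
          · exact hl.2.1 (hs.2.2 u hu v hv hl.1)
      · intro u v hl hu hv
        have hc := card12 hl hu hv
        refine ⟨fun hQ => ?_, fun hF => ?_⟩
        · have h1 := hQ.card
          obtain ⟨a, b, hab, h2, h3⟩ := hQ
          have ha : a ∈ ones (addEdge G u v) r := by simp [h2]
          have hb : b ∈ ones (addEdge G u v) r := by simp [h2]
          rw [(inside12 hl hu hv).1, mem_insert, mem_erase] at ha hb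
          have hne := hab.ne
          have huv := hl.1
          rcases hs with hs | hs | hs | hs
          · omega
          · omega
          · rw [addEdge_adj G hl.1] at hab
            rcases ha with rfl | ha <;> rcases hb with rfl | hb
            · exact hne rfl
            · have := hs.2.2 b hb.2 a hv
              rw [G.adj_comm] at this
              tauto
            · have := hs.2.2 a ha.2 b hv
              tauto
            · rcases hab with hab | hab | hab
              · -- `a`, `b`, `u` would be three distinct elements of `ones G r`
                have h4 : ({a, b, u} : Finset W).card ≤ (ones G r).card := by
                  apply card_le_card
                  intro z hz
                  simp only [mem_insert, mem_singleton] at hz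
                  rcases hz with rfl | rfl | rfl
                  exacts [ha.2, hb.2, hu]
                rw [card_eq_three.2 ⟨a, b, u, hne, ha.1, hb.1, rfl⟩] at h4
                omega
              · exact ha.1 hab.1
              · exact hb.1 hab.2
          · omega
        · unfold IsFat at hF
          have := card_pos.2 ⟨u, hu⟩
          omega
      · intro u v hl hu hv
        have hc := card22 hl hu hv
        refine ⟨fun hQ => ?_, fun hF => ?_⟩
        · have := hQ.card
          unfold Safe at hs
          omega
        · unfold IsFat at hF
          omega
    exact ⟨this.1, this.2, by omega⟩
  · intro u v hl hu hv
    obtain ⟨h1, h2, -⟩ := reply_attach hB hW hl hu hv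
    refine ⟨h1, fun hF => ?_, pot_attach hl hB.deg_le hu hv⟩
    have := h2 hF
    unfold Safe at hs
    omega
  · intro u v hl hu hv
    obtain ⟨h1, h2, h3⟩ := reply_outside hl hu hv
    refine ⟨fun hQ => ?_, fun hF => ?_, (pot_outside hl hB.deg_le hu hv).le⟩
    · have hQ' := h3 hQ
      have := hQ'.card
      obtain ⟨a, b, hab, h4, h5⟩ := hQ'
      rcases hs with hs | hs | hs | hs
      · omega
      · exact hs.2.2 a (by simp [h4]) b (by simp [h4]) hab
      · omega
      · omega
    · unfold IsFat at hF
      rw [h1, h2] at hF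
      unfold Safe at hs
      omega

lemma Big.exists_pair {G : SimpleGraph W} {r : W} (hB : Big G r) {U : Finset W}
    (hU : ∀ v ∈ U, v ∈ comp G r ∧ deg G v ≤ 2) (hc : 3 ≤ U.card) :
    ∃ p ∈ U, ∃ q ∈ U, p ≠ q ∧ ¬ G.Adj p q := by
  obtain ⟨a, b, c, ha, hb, hc, hab, hac, hbc⟩ := two_lt_card_iff.1 hc
  by_contra! h
  exact hB.no_triangle (hU a ha).1 (hU a ha).2 (hU b hb).2 (hU c hc).2
    (h a ha b hb hab) (h b hb c hc hbc) (h a ha c hc hac)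

lemma exists_nonnbr {G : SimpleGraph W} {v : W} {U : Finset W} (h : deg G v < U.card)  :
    ∃ w ∈ U, ¬ G.Adj v w := by
  by_contra! hall
  rw [deg_eq] at h
  have : U ⊆ univ.filter (G.Adj v) := fun w hw => by simpa using hall w hw
  have := card_le_card this
  omega

lemma Big.stubs_inside {G : SimpleGraph W} {r p q : W} (hB : Big G r) (hl : LegalMove 3 G p q)
    (hp : p ∈ comp G r) (hq : q ∈ comp G r) :
    (ones (addEdge G p q) r).card + 2 * (twos (addEdge G p q) r).card + 2
      = (ones G r).card + 2 * (twos G r).card := by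
  have h1 := (hB.add_edge hl).stubs_eq
  have h2 := hB.stubs_eq
  rw [comp_addEdge_same hl.1 (by simp [hp, hq])] at h1
  have h3 := stubs_addEdge hl hB.deg_le (comp G r)
  simp only [hp, hq, if_true] at h3
  omega

lemma Big.win_inside {G : SimpleGraph W} {r p q y : W} (hB : Big G r) (hl : LegalMove 3 G p q)
    (hp : p ∈ comp G r) (hq : q ∈ comp G r) (hy : y ∉ comp G r)
    (hs : (ones G r).card + 2 * (twos G r).card ≤ 3) : Win (addEdge G p q) := by
  have hc := comp_addEdge_same (G := G) (r := r) hl.1 (by simp [hp, hq])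
  apply win_of_stubs (r := r) (y := y) (by rwa [hc])
  have := hB.stubs_inside hl hp hq
  have := (hB.add_edge hl).stubs_eq
  omega

/-! ### Safe inner moves -/

/-- Some move inside the component of `r` wins or leads to a safe position. -/
def HasSafeMove (G : SimpleGraph W) (r : W) : Prop :=
  ∃ p q, LegalMove 3 G p q ∧ p ∈ comp G r ∧ q ∈ comp G r ∧
    (Win (addEdge G p q) ∨ Safe (addEdge G p q) r)

lemma Big.sat {G : SimpleGraph W} {r z : W} (hB : Big G r) (hz : z ∈ comp G r)
    (h1 : z ∉ ones G r) (h2 : z ∉ twos G r) : 3 ≤ deg G z := by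
  by_contra h
  rcases hB.mem_or hz (by omega) with h | h <;> tauto

lemma Big.exists_notMem {G : SimpleGraph W} {r : W} (hB : Big G r) {B : Finset W}
    (h : B.card ≤ 3) : ∃ z ∈ comp G r, z ∉ B := by
  by_contra! h'
  have := card_le_card (show comp G r ⊆ B from h')
  have := hB.card_ge
  omega

section Steps

variable {G : SimpleGraph W} {r y : W}

/-- Free valency at most three: joining two nonadjacent unsaturated vertices leaves free valency
at most one. If there are no such two vertices, the position is `IsQ` or already won. -/
lemma step_small (hB : Big G r) (hW : ¬ Win G) (hy : y ∉ comp G r) (hQ : ¬ IsQ G r)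
    (hs : (ones G r).card + 2 * (twos G r).card ≤ 3) : HasSafeMove G r := by
  have hst := hB.stubs_eq
  have h2 : 2 ≤ (ones G r).card + 2 * (twos G r).card := by
    by_contra h
    exact hW (win_of_stubs hy (by omega))
  suffices h : ∃ p q, p ≠ q ∧ ¬ G.Adj p q ∧ (p ∈ ones G r ∨ p ∈ twos G r) ∧
      (q ∈ ones G r ∨ q ∈ twos G r) by
    obtain ⟨p, q, hpq, hn, hp, hq⟩ := h
    rw [mem_ones, mem_twos] at hp hq
    have hl : LegalMove 3 G p q := legal_of hB.deg_le hpq hn (by omega) (by omega)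
    have hp' : p ∈ comp G r := by tauto
    have hq' : q ∈ comp G r := by tauto
    exact ⟨p, q, hl, hp', hq', Or.inl (hB.win_inside hl hp' hq' hy hs)⟩
  have hcases : ((ones G r).card = 2 ∧ (twos G r).card = 0) ∨
      ((ones G r).card = 0 ∧ (twos G r).card = 1) ∨
      ((ones G r).card = 3 ∧ (twos G r).card = 0) ∨
      ((ones G r).card = 1 ∧ (twos G r).card = 1) := by omega
  rcases hcases with ⟨h1, h2⟩ | ⟨h1, h2⟩ | ⟨h1, h2⟩ | ⟨h1, h2⟩
  · obtain ⟨u, v, huv, h3⟩ := card_eq_two.1 h1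
    refine ⟨u, v, huv, fun h => hQ ⟨u, v, h, h3, card_eq_zero.1 h2⟩, ?_, ?_⟩ <;> simp [h3]
  · exfalso
    rw [card_eq_zero] at h1
    obtain ⟨x, hx⟩ := card_eq_one.1 h2
    have hxm : x ∈ twos G r := by simp [hx]
    refine hW (win_of_pendant hB hy (mem_twos.1 hxm).2.le fun z hz hzx => ?_)
    exact hB.sat hz (by simp [h1]) (by simpa [hx] using hzx)
  · obtain ⟨p, hp, q, hq, h3, h4⟩ := hB.exists_pair (U := ones G r)
      (fun v hv => by rw [mem_ones] at hv; exact ⟨hv.1, hv.2.le⟩) (by omega)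
    exact ⟨p, q, h3, h4, Or.inl hp, Or.inl hq⟩
  · obtain ⟨o, ho⟩ := card_eq_one.1 h1
    obtain ⟨x, hx⟩ := card_eq_one.1 h2
    have hom : o ∈ ones G r := by simp [ho]
    have hxm : x ∈ twos G r := by simp [hx]
    have hox : o ≠ x := fun h => ones_not_twos hom (h ▸ hxm)
    refine ⟨o, x, hox, fun hadj => hW ?_, Or.inl hom, Or.inr hxm⟩
    have ho2 := (mem_ones.1 hom).2.le
    have hx1 := (mem_twos.1 hxm).2.le
    refine win_of_bridge hy {o, x} (hB.exists_notMem (by rw [card_pair hox]; omega)) ?_ ?_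
    · intro z hz hzB
      simp only [mem_insert, mem_singleton, not_or] at hzB
      exact hB.sat hz (by simpa [ho] using hzB.1) (by simpa [hx] using hzB.2)
    · intro a b a' b' ha ha' hb hb' hab hab'
      simp only [mem_insert, mem_singleton, not_or] at ha ha' hb hb'
      have key : ∀ a b, a ≠ o → (b = o ∨ b = x) → G.Adj a b → b = o := by
        rintro a b hao (rfl | rfl) hab
        · rfl
        · exact absurd (nbr_one hx1 hab.symm hadj.symm) hao
      have e1 := key a b ha.1 hb hab
      have e2 := key a' b' ha'.1 hb' hab'
      subst e1 e2
      have := nbr_two ho2 hadj hab.symm hab'.symm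
      exact ⟨by tauto, rfl⟩

/-- Free valency five: move to three ones and no twos. -/
lemma step_five (hB : Big G r)
    (hs : (ones G r).card + 2 * (twos G r).card = 5) : HasSafeMove G r := by
  suffices h : ∃ p q, LegalMove 3 G p q ∧ p ∈ comp G r ∧ q ∈ comp G r ∧
      (twos (addEdge G p q) r).card = 0 by
    obtain ⟨p, q, hl, hp, hq, h0⟩ := h
    refine ⟨p, q, hl, hp, hq, Or.inr (Or.inl ?_)⟩
    have := hB.stubs_inside hl hp hq
    omega
  have hcases : ((ones G r).card = 5 ∧ (twos G r).card = 0) ∨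
      ((ones G r).card = 3 ∧ (twos G r).card = 1) ∨
      ((ones G r).card = 1 ∧ (twos G r).card = 2) := by omega
  rcases hcases with ⟨h1, h2⟩ | ⟨h1, h2⟩ | ⟨h1, h2⟩
  · obtain ⟨p, hp, q, hq, h3, h4⟩ := hB.exists_pair (U := ones G r)
      (fun v hv => by rw [mem_ones] at hv; exact ⟨hv.1, hv.2.le⟩) (by omega)
    have hp' := mem_ones.1 hp
    have hq' := mem_ones.1 hq
    have hl := legal_of hB.deg_le h3 h4 hp'.2.le hq'.2.le
    exact ⟨p, q, hl, hp'.1, hq'.1, by rw [(card11 hl hp hq).2, h2]⟩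
  · obtain ⟨x, hx⟩ := card_pos.1 (show 0 < (twos G r).card by omega)
    have hx' := mem_twos.1 hx
    obtain ⟨w, hw, hn⟩ := exists_nonnbr (G := G) (v := x) (U := ones G r) (by omega)
    have hw' := mem_ones.1 hw
    have hl := legal_of (u := w) (v := x) hB.deg_le
      (fun h => ones_not_twos hw (h ▸ hx)) (fun h => hn h.symm) hw'.2.le (by omega)
    have := (card12 hl hw hx).2
    exact ⟨w, x, hl, hw'.1, hx'.1, by omega⟩
  · obtain ⟨x, z, hxz, h3⟩ := card_eq_two.1 h2
    have hx : x ∈ twos G r := by simp [h3]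
    have hz : z ∈ twos G r := by simp [h3]
    have hx' := mem_twos.1 hx
    have hz' := mem_twos.1 hz
    have hl := legal_of hB.deg_le hxz (hB.twos_indep hx hz) (by omega) (by omega)
    have := (card22 hl hx hz).2
    exact ⟨x, z, hl, hx'.1, hz'.1, by omega⟩

/-- Free valency at least seven: every inner move is safe, except that with free valency eight
one must not arrive at two nonadjacent ones and two twos; there two twos are joined if possible. -/
lemma step_large (hB : Big G r)
    (hs : 7 ≤ (ones G r).card + 2 * (twos G r).card) : HasSafeMove G r := by
  by_cases h8 : (ones G r).card + 2 * (twos G r).card = 8 ∧ 2 ≤ (twos G r).card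
  · obtain ⟨x, hx, z, hz, hxz⟩ := one_lt_card.1 h8.2
    have hx' := mem_twos.1 hx
    have hz' := mem_twos.1 hz
    have hl := legal_of hB.deg_le hxz (hB.twos_indep hx hz) (by omega) (by omega)
    refine ⟨x, z, hl, hx'.1, hz'.1, Or.inr ?_⟩
    have hc := card22 hl hx hz
    by_cases h0 : (ones G r).card = 0
    · refine Or.inr (Or.inr (Or.inr ⟨by omega, by omega, ?_⟩))
      rw [card_eq_zero] at h0
      rw [(inside22 hl hx hz).1, h0]
      intro u hu v hv huv
      simp only [mem_insert, notMem_empty, or_false] at hu hv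
      rw [addEdge_adj G hl.1]
      rcases hu with rfl | rfl <;> rcases hv with rfl | rfl <;> tauto
    · left
      omega
  · obtain ⟨p, hp, q, hq, h3, h4⟩ := hB.exists_pair (U := ones G r ∪ twos G r)
      (fun v hv => by
        rw [mem_union, mem_ones, mem_twos] at hv
        exact ⟨by tauto, by omega⟩)
      (by
        rw [card_union_of_disjoint (Finset.disjoint_left.2 fun v hv => ones_not_twos hv)]
        omega)
    rw [mem_union, mem_ones, mem_twos] at hp hq
    have hl := legal_of hB.deg_le h3 h4 (by omega) (by omega)
    have hp' : p ∈ comp G r := by tauto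
    have hq' : q ∈ comp G r := by tauto
    refine ⟨p, q, hl, hp', hq', Or.inr (Or.inl ?_)⟩
    have h5 := hB.stubs_inside hl hp' hq'
    have h6 : (twos (addEdge G p q) r).card ≤ (twos G r).card := by
      apply card_le_card
      intro v hv
      rw [mem_twos, comp_addEdge_same hl.1 (by simp [hp', hq']), deg_addEdge G hl.1 hl.2.1] at hv
      have := hB.deg_pos hv.1
      exact mem_twos.2 ⟨hv.1, by omega⟩
    omega

/-- Free valency six: move to two ones and a two adjacent to neither of them. -/
lemma step_six (hB : Big G r) (hS : ¬ IsSix G r)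
    (hs : (ones G r).card + 2 * (twos G r).card = 6) : HasSafeMove G r := by
  have hcases : ((ones G r).card = 4 ∧ (twos G r).card = 1) ∨
      ((ones G r).card = 2 ∧ (twos G r).card = 2) ∨
      ((ones G r).card = 0 ∧ (twos G r).card = 3) := by
    unfold IsSix at hS
    omega
  rcases hcases with ⟨h1, h2⟩ | ⟨h1, h2⟩ | ⟨h1, h2⟩
  · obtain ⟨x, hx⟩ := card_eq_one.1 h2
    have hxm : x ∈ twos G r := by simp [hx]
    have hx' := mem_twos.1 hxm
    suffices h : ∃ p ∈ ones G r, ∃ q ∈ ones G r, p ≠ q ∧ ¬ G.Adj p q ∧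
        ∀ a ∈ ones G r, a ≠ p → ¬ G.Adj a x by
      obtain ⟨p, hp, q, hq, hpq, hn, hx3⟩ := h
      have hp' := mem_ones.1 hp
      have hq' := mem_ones.1 hq
      have hl := legal_of hB.deg_le hpq hn hp'.2.le hq'.2.le
      have hc := card11 hl hp hq
      refine ⟨p, q, hl, hp'.1, hq'.1, Or.inr (Or.inr (Or.inr (Or.inl ⟨by omega, by omega, ?_⟩)))⟩
      rw [(inside11 hl hp hq).1, (inside11 hl hp hq).2, hx]
      intro u hu v hv
      rw [mem_singleton] at hv
      subst hv
      simp only [mem_erase] at hu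
      rw [addEdge_adj G hl.1]
      have := hx3 u hu.2.2 hu.2.1
      tauto
    by_cases hadj : ∃ a ∈ ones G r, G.Adj a x
    · obtain ⟨a, ha, hax⟩ := hadj
      have ha' := mem_ones.1 ha
      obtain ⟨w, hw, hn⟩ := exists_nonnbr (G := G) (v := a) (U := (ones G r).erase a) (by
        have := card_erase_add_one ha
        omega)
      rw [mem_erase] at hw
      exact ⟨a, ha, w, hw.2, hw.1.symm, hn, fun b _ hba hbx =>
        hba (nbr_one hx'.2.le hbx.symm hax.symm)⟩
    · push Not at hadj
      obtain ⟨p, hp, q, hq, h3, h4⟩ := hB.exists_pair (U := ones G r)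
        (fun v hv => by rw [mem_ones] at hv; exact ⟨hv.1, hv.2.le⟩) (by omega)
      exact ⟨p, hp, q, hq, h3, h4, fun a ha _ => hadj a ha⟩
  · obtain ⟨a, b, hab, ho⟩ := card_eq_two.1 h1
    obtain ⟨x, z, hxz, ht⟩ := card_eq_two.1 h2
    have key : ∀ a b x z : W, a ≠ b → x ≠ z → ones G r = {a, b} → twos G r = {x, z} →
        ¬ G.Adj b x → ¬ G.Adj a z → HasSafeMove G r := by
      intro a b x z hab hxz ho ht hbx haz
      have hbm : b ∈ ones G r := by simp [ho]
      have hxm : x ∈ twos G r := by simp [ht]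
      have hzm : z ∈ twos G r := by simp [ht]
      have hne : b ≠ x := fun h => ones_not_twos hbm (h ▸ hxm)
      have hb' := mem_ones.1 hbm
      have hx' := mem_twos.1 hxm
      have hl := legal_of hB.deg_le hne hbx hb'.2.le (by omega)
      have hc := card12 hl hbm hxm
      refine ⟨b, x, hl, hb'.1, hx'.1, Or.inr (Or.inr (Or.inr (Or.inl ⟨by omega, by omega, ?_⟩)))⟩
      have hxz' := hB.twos_indep hxm hzm
      have hzb : z ≠ b := fun h => ones_not_twos hbm (h ▸ hzm)
      rw [(inside12 hl hbm hxm).1, (inside12 hl hbm hxm).2]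
      intro u hu v hv
      simp only [mem_erase, mem_insert, ho, ht, mem_singleton] at hu hv
      rw [addEdge_adj G hl.1]
      have hvz : v = z := by tauto
      subst hvz
      rcases hu with rfl | ⟨h1, rfl | rfl⟩ <;> tauto
    have ha' := mem_ones.1 (show a ∈ ones G r by simp [ho])
    have hb' := mem_ones.1 (show b ∈ ones G r by simp [ho])
    have hxm : x ∈ twos G r := by simp [ht]
    have hzm : z ∈ twos G r := by simp [ht]
    by_cases e1 : G.Adj b x
    · by_cases e2 : G.Adj a x
      · exact absurd (nbr_one (mem_twos.1 hxm).2.le e1.symm e2.symm) hab.symm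
      · refine key b a x z hab.symm hxz (by rw [ho, pair_comm]) ht e2 fun h => ?_
        exact hB.no_cherry hxm hzm hxz hb'.2.le e1 h
    · by_cases e2 : G.Adj a z
      · refine key a b z x hab hxz.symm ho (by rw [ht, pair_comm]) (fun h => ?_) fun h => ?_
        · exact hab (nbr_one (mem_twos.1 hzm).2.le e2.symm h.symm)
        · exact hB.no_cherry hxm hzm hxz ha'.2.le h e2
      · exact key a b x z hab hxz ho ht e1 e2
  · obtain ⟨x, hx, z, hz, hxz⟩ := one_lt_card.1 (show 1 < (twos G r).card by omega)
    have hx' := mem_twos.1 hx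
    have hz' := mem_twos.1 hz
    have hl := legal_of hB.deg_le hxz (hB.twos_indep hx hz) (by omega) (by omega)
    have hc := card22 hl hx hz
    refine ⟨x, z, hl, hx'.1, hz'.1, Or.inr (Or.inr (Or.inr (Or.inl ⟨by omega, by omega, ?_⟩)))⟩
    rw [card_eq_zero] at h1
    rw [(inside22 hl hx hz).1, (inside22 hl hx hz).2, h1]
    intro u hu v hv
    simp only [mem_erase, mem_insert, notMem_empty, or_false] at hu hv
    rw [addEdge_adj G hl.1]
    have hu2 : u ∈ twos G r := by rcases hu with rfl | rfl <;> assumption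
    have := hB.twos_indep hu2 hv.2.2
    tauto

/-- Four ones: some perfect matching of them avoids the graph; draw one of its edges, so that
the two remaining ones are nonadjacent. -/
lemma step_four_ones (hB : Big G r) (h1 : (ones G r).card = 4) (h2 : (twos G r).card = 0) :
    HasSafeMove G r := by
  obtain ⟨a, U, haU, hU, hUc⟩ := card_eq_succ.1 h1
  obtain ⟨b, c, d, hbc, hbd, hcd, rfl⟩ := card_eq_three.1 hUc
  have key : ∀ a b c d : W, a ≠ b → c ≠ d → ones G r = {a, b, c, d} →
      ¬ G.Adj a b → ¬ G.Adj c d → HasSafeMove G r := by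
    intro a b c d hab hcd ho n1 n2
    have ha : a ∈ ones G r := by simp [ho]
    have hb : b ∈ ones G r := by simp [ho]
    have ha' := mem_ones.1 ha
    have hb' := mem_ones.1 hb
    have hl := legal_of hB.deg_le hab n1 ha'.2.le hb'.2.le
    have hc := card11 hl ha hb
    refine ⟨a, b, hl, ha'.1, hb'.1, Or.inr (Or.inr (Or.inl ⟨by omega, by omega, ?_⟩))⟩
    rw [(inside11 hl ha hb).1, ho]
    intro u hu v hv
    simp only [mem_erase, mem_insert, mem_singleton] at hu hv
    rw [addEdge_adj G hl.1]
    have hu' : u = c ∨ u = d := by tauto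
    have hv' : v = c ∨ v = d := by tauto
    have n3 : ¬ G.Adj d c := fun h => n2 h.symm
    rcases hu' with rfl | rfl <;> rcases hv' with rfl | rfl <;> simp <;> tauto
  simp only [mem_insert, mem_singleton, not_or] at haU
  obtain ⟨hab, hac, had⟩ := haU
  have ma : a ∈ ones G r := by rw [← hU]; simp
  have mb : b ∈ ones G r := by rw [← hU]; simp
  have mc : c ∈ ones G r := by rw [← hU]; simp
  have md : d ∈ ones G r := by rw [← hU]; simp
  rw [mem_ones] at ma mb mc md
  by_contra hno
  -- the three perfect matchings of `{a, b, c, d}` all meet the graph, forcing a star or a triangle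
  have m1 : G.Adj a b ∨ G.Adj c d := by
    by_contra! h
    exact hno (key a b c d hab hcd hU.symm h.1 h.2)
  have m2 : G.Adj a c ∨ G.Adj b d := by
    by_contra! h
    exact hno (key a c b d hac hbd (by rw [← hU, insert_comm b c]) h.1 h.2)
  have m3 : G.Adj a d ∨ G.Adj b c := by
    by_contra! h
    exact hno (key a d b c had hbc (by rw [← hU, pair_comm c d, insert_comm b d]) h.1 h.2)
  rcases m1 with m1 | m1 <;> rcases m2 with m2 | m2 <;> rcases m3 with m3 | m3
  · exact (nbr_two ma.2.le m1 m2 m3).elim hbc (Or.rec hbd hcd)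
  · exact hB.no_triangle ma.1 ma.2.le mb.2.le mc.2.le m1 m3 m2
  · exact hB.no_triangle ma.1 ma.2.le mb.2.le md.2.le m1 m2 m3
  · exact (nbr_two mb.2.le m1.symm m2 m3).elim had (Or.rec hac hcd.symm)
  · exact hB.no_triangle ma.1 ma.2.le mc.2.le md.2.le m2 m1 m3
  · exact (nbr_two mc.2.le m2.symm m1 m3.symm).elim had (Or.rec hab hbd.symm)
  · exact (nbr_two md.2.le m1.symm m2.symm m3.symm).elim hbc.symm (Or.rec (Ne.symm hac) (Ne.symm hab))
  · exact hB.no_triangle mb.1 mb.2.le mc.2.le md.2.le m3 m1 m2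

/-- Two ones `b`, `c` and a two `x`. If `x` is adjacent to neither, joining it to `b` leaves two
nonadjacent ones. If `x` is adjacent to `b` alone, joining `b` and `c` leaves a single leaf `x`, unless
`x`, `b`, `c` form a path, which hangs on a single edge. -/
lemma step_two_ones_two (hB : Big G r) (hW : ¬ Win G) (hy : y ∉ comp G r)
    (h1 : (ones G r).card = 2) (h2 : (twos G r).card = 1) : HasSafeMove G r := by
  obtain ⟨x, hx⟩ := card_eq_one.1 h2
  have hxm : x ∈ twos G r := by simp [hx]
  have hx' := mem_twos.1 hxm
  -- reduce to the case where `x` is not adjacent to the second one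
  obtain ⟨b, c, hbc, ho, hxc⟩ : ∃ b c, b ≠ c ∧ ones G r = {b, c} ∧ ¬ G.Adj x c := by
    obtain ⟨b, c, hbc, ho⟩ := card_eq_two.1 h1
    by_cases e : G.Adj x c
    · exact ⟨c, b, hbc.symm, by rw [ho, pair_comm], fun h => hbc (nbr_one hx'.2.le h e)⟩
    · exact ⟨b, c, hbc, ho, e⟩
  have hbm : b ∈ ones G r := by simp [ho]
  have hcm : c ∈ ones G r := by simp [ho]
  have hb' := mem_ones.1 hbm
  have hc' := mem_ones.1 hcm
  have hbx : b ≠ x := fun h => ones_not_twos hbm (h ▸ hxm)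
  have hcx : c ≠ x := fun h => ones_not_twos hcm (h ▸ hxm)
  by_cases e1 : G.Adj b x
  · by_cases e2 : G.Adj b c
    · exfalso
      apply hW
      refine win_of_bridge hy {b, c, x} (hB.exists_notMem card_le_three) ?_ ?_
      · intro z hz hzB
        simp only [mem_insert, mem_singleton, not_or] at hzB
        exact hB.sat hz (by simp [ho, hzB.1, hzB.2.1]) (by simp [hx, hzB.2.2])
      · intro p q p' q' hp hp' hq hq' hpq hpq'
        simp only [mem_insert, mem_singleton, not_or] at hp hp' hq hq'
        have key : ∀ p q, p ≠ b → p ≠ c → p ≠ x → (q = b ∨ q = c ∨ q = x) → G.Adj p q →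
            q = c := by
          rintro p q h1 h2 h3 (rfl | rfl | rfl) hpq
          · rcases nbr_two hb'.2.le e1 e2 hpq.symm with h | h | h
            exacts [absurd h.symm hcx, absurd h.symm h3, absurd h.symm h2]
          · rfl
          · exact absurd (nbr_one hx'.2.le hpq.symm e1.symm) h1
        have k1 := key p q hp.1 hp.2.1 hp.2.2 hq hpq
        have k2 := key p' q' hp'.1 hp'.2.1 hp'.2.2 hq' hpq'
        subst k1 k2
        refine ⟨?_, rfl⟩
        rcases nbr_two hc'.2.le e2.symm hpq.symm hpq'.symm with h | h | h
        exacts [absurd h.symm hp.1, absurd h.symm hp'.1, h]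
    · have hl := legal_of hB.deg_le hbc e2 hb'.2.le hc'.2.le
      refine ⟨b, c, hl, hb'.1, hc'.1, Or.inl ?_⟩
      have hcomp := comp_addEdge_same (G := G) (r := r) hl.1 (by simp [hb'.1, hc'.1])
      refine win_of_pendant (r := r) (u := x) (hB.add_edge hl) (by rwa [hcomp]) ?_ ?_
      · rw [deg_addEdge G hl.1 hl.2.1]
        simp [hbx.symm, hcx.symm, hx'.2]
      · intro z hz hzx
        apply (hB.add_edge hl).sat hz
        · rw [(inside11 hl hbm hcm).1, ho]
          simp
          tauto
        · rw [(inside11 hl hbm hcm).2, hx]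
          simpa using hzx
  · have hl := legal_of hB.deg_le hbx e1 hb'.2.le (by omega)
    have hc := card12 hl hbm hxm
    refine ⟨b, x, hl, hb'.1, hx'.1, Or.inr (Or.inr (Or.inl ⟨by omega, by omega, ?_⟩))⟩
    rw [(inside12 hl hbm hxm).1, ho]
    intro u hu v hv
    simp only [mem_erase, mem_insert, mem_singleton] at hu hv
    rw [addEdge_adj G hl.1]
    have hu' : u = c ∨ u = x := by tauto
    have hv' : v = c ∨ v = x := by tauto
    have n3 : ¬ G.Adj c x := fun h => hxc h.symm
    rcases hu' with rfl | rfl <;> rcases hv' with rfl | rfl <;> simp <;> tauto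

lemma step_four (hB : Big G r) (hW : ¬ Win G) (hy : y ∉ comp G r) (hF : ¬ IsFat G r)
    (hs : (ones G r).card + 2 * (twos G r).card = 4) : HasSafeMove G r := by
  have hcases : ((ones G r).card = 4 ∧ (twos G r).card = 0) ∨
      ((ones G r).card = 2 ∧ (twos G r).card = 1) := by
    unfold IsFat at hF
    omega
  rcases hcases with ⟨h1, h2⟩ | ⟨h1, h2⟩
  · exact step_four_ones hB h1 h2
  · exact step_two_ones_two hB hW hy h1 h2

lemma step_normal (hB : Big G r) (hW : ¬ Win G) (hy : y ∉ comp G r) (hQ : ¬ IsQ G r)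
    (hF : ¬ IsFat G r) (hS : ¬ IsSix G r) : HasSafeMove G r := by
  have : (ones G r).card + 2 * (twos G r).card ≤ 3 ∨
      (ones G r).card + 2 * (twos G r).card = 4 ∨ (ones G r).card + 2 * (twos G r).card = 5 ∨
      (ones G r).card + 2 * (twos G r).card = 6 ∨ 7 ≤ (ones G r).card + 2 * (twos G r).card := by
    omega
  rcases this with h | h | h | h | h
  · exact step_small hB hW hy hQ h
  · exact step_four hB hW hy hF h
  · exact step_five hB h
  · exact step_six hB hS h
  · exact step_large hB h

end Steps

/-! ### The measure and a full round -/

/-- The weight of the kind of position. -/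
noncomputable def tau (G : SimpleGraph W) (r : W) : ℕ :=
  if IsQ G r then 18 else if IsFat G r then 9 else if IsSix G r then 3 else 0

/-- The measure that does not increase over a round. -/
noncomputable def mu (G : SimpleGraph W) (r : W) : ℕ :=
  8 * pot G r + 4 * tau G r + totalDeg G

lemma tau_le (G : SimpleGraph W) (r : W) : tau G r ≤ 18 := by
  unfold tau
  split_ifs <;> omega

lemma tau_le_nine {G : SimpleGraph W} {r : W} (hQ : ¬ IsQ G r) : tau G r ≤ 9 := by
  unfold tau
  split_ifs <;> omega

lemma tau_le_three {G : SimpleGraph W} {r : W} (hQ : ¬ IsQ G r) (hF : ¬ IsFat G r) :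
    tau G r ≤ 3 := by
  unfold tau
  split_ifs <;> omega

lemma tau_zero {G : SimpleGraph W} {r : W} (hQ : ¬ IsQ G r) (hF : ¬ IsFat G r)
    (hS : ¬ IsSix G r) : tau G r = 0 := by
  simp [tau, hQ, hF, hS]

/-- Some move of the second player is such that every reply leads to a won position or to one
of no greater measure. -/
def HasGoodMove (G : SimpleGraph W) (r : W) : Prop :=
  ∃ p q, LegalMove 3 G p q ∧ ∀ u v, LegalMove 3 (addEdge G p q) u v →
    Win (addEdge (addEdge G p q) u v) ∨ mu (addEdge (addEdge G p q) u v) r ≤ mu G r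

/-- The two edges of a round raise `totalDeg` by `4`, which the rest of `mu` has to compensate. -/
lemma good_of {G : SimpleGraph W} {r p q : W} (hl : LegalMove 3 G p q)
    (h : ¬ Win (addEdge G p q) → ∀ u v, LegalMove 3 (addEdge G p q) u v →
      8 * pot (addEdge (addEdge G p q) u v) r + 4 * tau (addEdge (addEdge G p q) u v) r + 4
        ≤ 8 * pot G r + 4 * tau G r) : HasGoodMove G r := by
  refine ⟨p, q, hl, fun u v hl' => ?_⟩
  by_cases hW : Win (addEdge G p q)
  · exact Or.inl (hW.mono (le_addEdge _ u v))
  · right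
    have h1 := h hW u v hl'
    have h2 := totalDeg_addEdge hl
    have h3 := totalDeg_addEdge hl'
    unfold mu
    omega

lemma round_normal {G : SimpleGraph W} {r : W} (hB : Big G r) (h : HasSafeMove G r) :
    HasGoodMove G r := by
  obtain ⟨p, q, hl, hp, hq, h⟩ := h
  refine good_of hl fun hW u v hl' => ?_
  obtain ⟨h1, h2, h3⟩ := safe_reply (hB.add_edge hl) hW (h.resolve_left hW) u v hl'
  have h4 := tau_le_three h1 h2
  have h5 := pot_inside hl hB.deg_le hp hq
  omega

/-- After joining two of the six ones the opponent can reach `IsQ`, but only by an inner move,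
so the potential drops by `8`. -/
lemma round_six {G : SimpleGraph W} {r : W} (hB : Big G r) (hS : IsSix G r) :
    HasGoodMove G r := by
  obtain ⟨h1, h2⟩ := hS
  obtain ⟨p, hp, q, hq, h3, h4⟩ := hB.exists_pair (U := ones G r)
    (fun v hv => by rw [mem_ones] at hv; exact ⟨hv.1, hv.2.le⟩) (by omega)
  have hp' := mem_ones.1 hp
  have hq' := mem_ones.1 hq
  have hl := legal_of hB.deg_le h3 h4 hp'.2.le hq'.2.le
  have hc := card11 hl hp hq
  have hB' := hB.add_edge hl
  have hpot := pot_inside hl hB.deg_le hp'.1 hq'.1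
  have htau : tau G r = 3 := by
    have hQ : ¬ IsQ G r := fun h => by have := h.card; omega
    have hF : ¬ IsFat G r := fun h => by unfold IsFat at h; omega
    have hS : IsSix G r := ⟨h1, h2⟩
    simp [tau, hQ, hF, hS]
  refine good_of hl fun hW => ?_
  rw [htau]
  refine legal_induct (r := r) (P := fun H => 8 * pot H r + 4 * tau H r + 4 ≤ 8 * pot G r + 4 * 3)
    ?_ ?_ ?_
  · intro u v hl' hu hv
    have := pot_inside hl' hB'.deg_le hu hv
    have := tau_le (addEdge (addEdge G p q) u v) r
    omega
  · intro u v hl' hu hv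
    have := pot_attach hl' hB'.deg_le hu hv
    obtain ⟨h5, h6, -⟩ := reply_attach hB' hW hl' hu hv
    have := tau_le_three h5 (fun h => by have := h6 h; omega)
    omega
  · intro u v hl' hu hv
    have := pot_outside hl' hB'.deg_le hu hv
    obtain ⟨h5, h6, -⟩ := reply_outside hl' hu hv
    have hQ : ¬ IsQ (addEdge (addEdge G p q) u v) r := fun h => by
      have := h.card
      rw [h5, h6] at this
      omega
    have hF : ¬ IsFat (addEdge (addEdge G p q) u v) r := fun h => by
      unfold IsFat at h
      rw [h5, h6] at h
      omega
    have := tau_le_three hQ hF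
    omega

/-- Attaching an isolated vertex `x` to the component creates the two `x` and raises the free
valency by one. -/
lemma Big.attach_isolated {G : SimpleGraph W} {r u x : W} (hB : Big G r) (hx : deg G x = 0)
    (hu : u ∈ comp G r) (hdu : deg G u ≤ 2) :
    x ∉ comp G r ∧ LegalMove 3 G u x ∧ x ∈ twos (addEdge G u x) r ∧
    (ones (addEdge G u x) r).card + 2 * (twos (addEdge G u x) r).card
      = (ones G r).card + 2 * (twos G r).card + 1 := by
  have hxS : x ∉ comp G r := fun h => by
    have := hB.deg_pos h
    omega
  have hux : u ≠ x := fun h => hxS (h ▸ hu)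
  have hn : ¬ G.Adj u x := fun h => hxS (comp_closed hu h)
  have hl := legal_of hB.deg_le hux hn hdu (by omega)
  refine ⟨hxS, hl, ?_, ?_⟩
  · rw [mem_twos, comp_addEdge_join hux hu, deg_addEdge G hux hn]
    simp [self_mem_comp, hx, hux.symm]
  · have h1 := stubs_attach hl hB.deg_le hu hxS
    rw [hB.stubs_eq, (hB.add_edge hl).stubs_eq, comp_isolated hx] at h1
    simp only [stubs, sum_singleton, hx] at h1
    omega

/-- Attaching an isolated vertex yields a one and a two, from which no reply leads to `IsQ`. -/
lemma round_Q {G : SimpleGraph W} {r x : W} (hB : Big G r) (hx : deg G x = 0)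
    (hQ : IsQ G r) : HasGoodMove G r := by
  have htau : tau G r = 18 := by simp [tau, hQ]
  have hcQ := hQ.card
  obtain ⟨a, b, hab, h1, h2⟩ := hQ
  have ha : a ∈ ones G r := by simp [h1]
  have ha' := mem_ones.1 ha
  obtain ⟨hxS, hl, hxt, hs⟩ := hB.attach_isolated hx ha'.1 ha'.2.le
  have hpot := pot_attach hl hB.deg_le ha'.1 hxS
  have hB' := hB.add_edge hl
  have htpos := card_pos.2 ⟨x, hxt⟩
  refine good_of hl fun hW => ?_
  rw [htau]
  refine legal_induct (r := r)
    (P := fun H => 8 * pot H r + 4 * tau H r + 4 ≤ 8 * pot G r + 4 * 18) ?_ ?_ ?_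
  · intro u v hl' hu hv
    have := pot_inside hl' hB'.deg_le hu hv
    have h3 := hB'.stubs_inside hl' hu hv
    have := tau_le_nine (G := addEdge (addEdge G a x) u v) (r := r) (fun h => by
      have := h.card
      omega)
    omega
  · intro u v hl' hu hv
    have := pot_attach hl' hB'.deg_le hu hv
    have := tau_le_nine (reply_attach hB' hW hl' hu hv).1
    omega
  · intro u v hl' hu hv
    have := pot_outside hl' hB'.deg_le hu hv
    obtain ⟨h5, h6, -⟩ := reply_outside hl' hu hv
    have := tau_le_nine (G := addEdge (addEdge G a x) u v) (r := r) (fun h => by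
      have := h.card
      rw [h5, h6] at this
      omega)
    omega

/-- Attaching an isolated vertex yields a one and two twos. After an inner reply the potential
is no larger than before, up to the weight; any other reply leads to none of the three special kinds. -/
lemma round_fat {G : SimpleGraph W} {r x : W} (hB : Big G r) (hx : deg G x = 0)
    (hF : IsFat G r) : HasGoodMove G r := by
  have htau : tau G r = 9 := by
    have hQ : ¬ IsQ G r := fun h => by
      have := h.card
      unfold IsFat at hF
      omega
    simp [tau, hQ, hF]
  obtain ⟨h1, h2⟩ := hF
  obtain ⟨a, b, hab, h3⟩ := card_eq_two.1 h2
  have ha : a ∈ twos G r := by simp [h3]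
  have hb : b ∈ twos G r := by simp [h3]
  have ha' := mem_twos.1 ha
  have hb' := mem_twos.1 hb
  obtain ⟨hxS, hl, hxt, hs⟩ := hB.attach_isolated hx ha'.1 (by omega)
  have hpot := pot_attach hl hB.deg_le ha'.1 hxS
  have hB' := hB.add_edge hl
  have hbx : b ≠ x := fun h => hxS (h ▸ hb'.1)
  have hbt : b ∈ twos (addEdge G a x) r := by
    rw [mem_twos, deg_addEdge G hl.1 hl.2.1]
    refine ⟨comp_mono (le_addEdge G a x) r hb'.1, ?_⟩
    simp [hab.symm, hbx, hb'.2]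
  have htwo : 1 < (twos (addEdge G a x) r).card := one_lt_card.2 ⟨b, hbt, x, hxt, hbx⟩
  refine good_of hl fun hW => ?_
  rw [htau]
  refine legal_induct (r := r)
    (P := fun H => 8 * pot H r + 4 * tau H r + 4 ≤ 8 * pot G r + 4 * 9) ?_ ?_ ?_
  · intro u v hl' hu hv
    have := pot_inside hl' hB'.deg_le hu hv
    have h3 := hB'.stubs_inside hl' hu hv
    have := tau_le_nine (G := addEdge (addEdge G a x) u v) (r := r) (fun h => by
      have := h.card
      omega)
    omega
  · intro u v hl' hu hv
    have := pot_attach hl' hB'.deg_le hu hv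
    obtain ⟨h4, h5, h6⟩ := reply_attach hB' hW hl' hu hv
    have := tau_zero h4 (fun h => by have := h5 h; omega) (fun h => by unfold IsSix at h; omega)
    omega
  · intro u v hl' hu hv
    have := pot_outside hl' hB'.deg_le hu hv
    obtain ⟨h5, h6, -⟩ := reply_outside hl' hu hv
    have := tau_zero (G := addEdge (addEdge G a x) u v) (r := r)
      (fun h => by
        have := h.card
        rw [h5, h6] at this
        omega)
      (fun h => by
        unfold IsFat at h
        rw [h5, h6] at h
        omega)
      (fun h => by
        unfold IsSix at h
        rw [h5, h6] at h
        omega)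
    omega

lemma round {G : SimpleGraph W} {r x : W} (hB : Big G r) (hW : ¬ Win G) (hx : deg G x = 0) :
    HasGoodMove G r := by
  have hy : x ∉ comp G r := fun h => by
    have := hB.deg_pos h
    omega
  by_cases hQ : IsQ G r
  · exact round_Q hB hx hQ
  by_cases hF : IsFat G r
  · exact round_fat hB hx hF
  by_cases hS : IsSix G r
  · exact round_six hB hS
  exact round_normal hB (step_normal hB hW hy hQ hF hS)

lemma exists_isolated {G : SimpleGraph W} (r : W) (h : totalDeg G + 1 < Fintype.card W) :
    ∃ x, x ≠ r ∧ deg G x = 0 := by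
  by_contra! h'
  have h1 : (univ.erase r).card • 1 ≤ ∑ v ∈ univ.erase r, deg G v := by
    apply Finset.card_nsmul_le_sum
    intro v hv
    have := h' v (ne_of_mem_erase hv)
    omega
  have h2 : ∑ v ∈ univ.erase r, deg G v ≤ totalDeg G := sum_le_sum_of_subset (subset_univ _)
  rw [card_erase_of_mem (mem_univ r), card_univ, smul_eq_mul] at h1
  omega

/-! ### The strategy -/

/-- The invariant with the second player to move, for a start position of total degree `e`:
the game is won, or the opening is under way, or the measure is bounded. -/
def Inv2 (e : ℕ) (r : W) (G : SimpleGraph W) : Prop :=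
  (∀ v, deg G v ≤ 3) ∧ (Win G ∨
    ((comp G r).card ≤ 3 ∧ totalDeg G + 2 ≤ e + 4 * (comp G r).card) ∨
    (4 ≤ (comp G r).card ∧ mu G r ≤ 9 * e + 246))

/-- The invariant with the first player to move. -/
def Inv1 (e : ℕ) (r : W) (G : SimpleGraph W) : Prop :=
  (((∀ v, deg G v ≤ 3) ∧ Win G) ∨ ∃ x, x ≠ r ∧ deg G x = 0) ∧
    ∀ u v, LegalMove 3 G u v → Inv2 e r (addEdge G u v)

/-- The bound on `mu` at the moment the component of `r` reaches four vertices: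
`8 * (t + 6) + 4 * 18 + t` with total degree `t ≤ e + 14`. -/
lemma Inv2.of_totalDeg {e : ℕ} {r : W} {G : SimpleGraph W} (hd : ∀ v, deg G v ≤ 3)
    (h1 : totalDeg G + 2 ≤ e + 4 * (comp G r).card) (h2 : totalDeg G ≤ e + 14) :
    Inv2 e r G := by
  refine ⟨hd, Or.inr ?_⟩
  by_cases h : (comp G r).card ≤ 3
  · exact Or.inl ⟨h, h1⟩
  · refine Or.inr ⟨by omega, ?_⟩
    have h3 := pot_le hd r
    have h4 := tau_le G r
    unfold mu
    omega

/-- `G` is disconnected or has a vertex whose removal leaves a disconnected graph. -/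
def Bad (G : SimpleGraph W) : Prop :=
  ¬ G.Connected ∨ ∃ v : W, ¬ (G.induce ({v}ᶜ : Set W)).Connected

lemma Inv1.bad {e : ℕ} {r : W} {G : SimpleGraph W} (h : Inv1 e r G) : Bad G := by
  rcases h.1 with ⟨hd, hW⟩ | ⟨x, hxr, hx⟩
  · exact hW.not_two_connected hd
  · exact Or.inl (not_connected_of_isolated hx hxr)

lemma Inv2.step {e : ℕ} {r : W} {G : SimpleGraph W} (hc : 9 * e + 260 ≤ Fintype.card W)
    (h : Inv2 e r G) : Bad G ∧ (¬ Terminal 3 G → ∃ u v, LegalMove 3 G u v ∧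
      Inv1 e r (addEdge G u v)) := by
  obtain ⟨hd, h⟩ := h
  by_cases hW : Win G
  · refine ⟨hW.not_two_connected hd, fun hT => ?_⟩
    unfold Terminal at hT
    push Not at hT
    obtain ⟨u, v, hl⟩ := hT
    have hW' := hW.mono (le_addEdge G u v)
    exact ⟨u, v, hl, Or.inl ⟨hl.2.2, hW'⟩, fun a b hl' =>
      ⟨hl'.2.2, Or.inl (hW'.mono (le_addEdge _ a b))⟩⟩
  have htot : totalDeg G ≤ 9 * e + 246 := by
    rcases h with h | h | h
    · exact absurd h hW
    · omega
    · unfold mu at h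
      omega
  obtain ⟨x, hxr, hx⟩ := exists_isolated (G := G) r (by omega)
  refine ⟨Or.inl (not_connected_of_isolated hx hxr), fun _ => ?_⟩
  rcases h with h | h | h
  · exact absurd h hW
  · have hxS : x ∉ comp G r := by
      intro hxS
      have : r ∈ comp G x := mem_comp.2 (mem_comp.1 hxS).symm
      rw [comp_isolated hx, mem_singleton] at this
      exact hxr this.symm
    have hrS := self_mem_comp G r
    have hdr : deg G r ≤ 2 := by
      rw [deg_eq]
      have h1 : univ.filter (G.Adj r) ⊆ (comp G r).erase r := by
        intro v hv
        have hv' : G.Adj r v := by simpa using hv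
        exact mem_erase.2 ⟨hv'.ne.symm, comp_closed hrS hv'⟩
      have h2 := card_le_card h1
      rw [card_erase_of_mem hrS] at h2
      omega
    have hl : LegalMove 3 G r x := legal_of hd hxr.symm (fun h => hxS (comp_closed hrS h)) hdr
      (by omega)
    have ht := totalDeg_addEdge hl
    have hcard : (comp G r).card + 1 ≤ (comp (addEdge G r x) r).card := by
      rw [comp_addEdge_join hl.1 hrS, comp_isolated hx,
        card_union_of_disjoint (by simpa using hxS), card_singleton]
    refine ⟨r, x, hl, Or.inr (exists_isolated r (by omega)), fun a b hl' => ?_⟩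
    have ht' := totalDeg_addEdge hl'
    have hcard' := card_le_card (comp_mono (le_addEdge (addEdge G r x) a b) r)
    exact Inv2.of_totalDeg hl'.2.2 (by omega) (by omega)
  · have hB : Big G r := ⟨hd, h.1⟩
    obtain ⟨p, q, hl, hgood⟩ := round hB hW hx
    have ht := totalDeg_addEdge hl
    refine ⟨p, q, hl, Or.inr (exists_isolated r (by omega)), fun a b hl' => ⟨hl'.2.2, ?_⟩⟩
    rcases hgood a b hl' with h1 | h1
    · exact Or.inl h1
    · exact Or.inr (Or.inr ⟨((hB.add_edge hl).add_edge hl').card_ge, h1.trans h.2⟩)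

/-- Invariants for the turns of the two players, each implying `P`, yield a strategy of the second
player ensuring `P`. -/
lemma ensures_of_invariants {P : SimpleGraph W → Prop} {J1 J2 : SimpleGraph W → Prop}
    {G₀ : SimpleGraph W} (r : W) (h0 : J1 G₀)
    (h1 : ∀ G, J1 G → P G ∧ ∀ u v, LegalMove 3 G u v → J2 (addEdge G u v))
    (h2 : ∀ G, J2 G → P G ∧ (¬ Terminal 3 G → ∃ u v, LegalMove 3 G u v ∧ J1 (addEdge G u v))) :
    Ensures 3 1 G₀ P := by
  have hex : ∀ G : SimpleGraph W, ∃ m : W × W, ¬ Terminal 3 G →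
      LegalMove 3 G m.1 m.2 ∧ (J2 G → J1 (addEdge G m.1 m.2)) := by
    intro G
    by_cases hT : Terminal 3 G
    · exact ⟨(r, r), fun h => absurd hT h⟩
    by_cases hJ : J2 G
    · obtain ⟨u, v, hl, hJ1⟩ := (h2 G hJ).2 hT
      exact ⟨(u, v), fun _ => ⟨hl, fun _ => hJ1⟩⟩
    · have hT' := hT
      unfold Terminal at hT'
      push Not at hT'
      obtain ⟨u, v, hl⟩ := hT'
      exact ⟨(u, v), fun _ => ⟨hl, fun h => absurd h hJ⟩⟩
  choose s hs using hex
  refine ⟨s, fun G hT => (hs G hT).1, fun g hg => ?_⟩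
  have key : ∀ i, (Terminal 3 (g i) ∧ P (g i)) ∨ (i % 2 = 0 ∧ J1 (g i)) ∨
      (i % 2 = 1 ∧ J2 (g i)) := by
    intro i
    induction i with
    | zero => exact Or.inr (Or.inl ⟨rfl, hg.1 ▸ h0⟩)
    | succ i ih =>
      obtain ⟨hg1, hg2⟩ := hg.2 i
      by_cases hT : Terminal 3 (g i)
      · left
        rw [hg1 hT]
        refine ⟨hT, ?_⟩
        rcases ih with ih | ih | ih
        exacts [ih.2, (h1 _ ih.2).1, (h2 _ ih.2).1]
      · obtain ⟨hr, hn⟩ := hg2 hT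
        rcases ih with ih | ih | ih
        · exact absurd ih.1 hT
        · obtain ⟨u, v, hl, he⟩ := hn (by omega)
          exact Or.inr (Or.inr ⟨by omega, he ▸ (h1 _ ih.2).2 u v hl⟩)
        · exact Or.inr (Or.inl ⟨by omega, hr ih.1 ▸ (hs _ hT).2 ih.2⟩)
  intro n hT
  rcases key n with h | h | h
  exacts [h.2, (h1 _ h.2).1, (h2 _ h.2).1]

end Machine

/-! ### The initial position -/

lemma deg_map_inl {V V' : Type} (G : SimpleGraph V) (v : V) :
    deg (SimpleGraph.map Function.Embedding.inl G : SimpleGraph (V ⊕ V')) (Sum.inl v)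
      = deg G v := by
  have h : (SimpleGraph.map Function.Embedding.inl G : SimpleGraph (V ⊕ V')).neighborSet
      (Sum.inl v) = Set.image Sum.inl (G.neighborSet v) := by
    ext w
    simp only [SimpleGraph.mem_neighborSet, SimpleGraph.map_adj, Set.mem_image,
      Function.Embedding.inl_apply]
    constructor
    · rintro ⟨a, b, hab, ha, rfl⟩
      exact ⟨b, Sum.inl_injective ha ▸ hab, rfl⟩
    · rintro ⟨b, hb, rfl⟩
      exact ⟨v, b, hb, rfl, rfl⟩
  rw [deg, h, Set.ncard_image_of_injective _ Sum.inl_injective, deg]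

lemma deg_map_inr {V V' : Type} (G : SimpleGraph V) (v : V') :
    deg (SimpleGraph.map Function.Embedding.inl G : SimpleGraph (V ⊕ V')) (Sum.inr v) = 0 := by
  have : (SimpleGraph.map Function.Embedding.inl G : SimpleGraph (V ⊕ V')).neighborSet
      (Sum.inr v) = ∅ := by
    ext w
    simp [SimpleGraph.map_adj]
  rw [deg, this, Set.ncard_empty]

end GraphGame

open GraphGame in
/-- For every finite simple graph `G₀` with maximum degree at most 3, there is an `N` such
that in the 3-regular graph game starting from the disjoint union of `G₀` and `N` extra
isolated vertices, the second player has a strategy ensuring that the final graph is not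
2-connected (i.e. it is disconnected, has fewer than 3 vertices, or has a cut vertex). -/
theorem second_player_can_avoid_two_connectedness
    (V : Type) [Fintype V] (G₀ : SimpleGraph V) (hdeg : ∀ v, deg G₀ v ≤ 3) :
    ∃ N : ℕ, Ensures 3 1
      (SimpleGraph.map Function.Embedding.inl G₀ : SimpleGraph (V ⊕ Fin N))
      (fun G => ¬ G.Connected ∨ Fintype.card (V ⊕ Fin N) < 3 ∨
        ∃ v : V ⊕ Fin N, ¬ (G.induce ({v}ᶜ : Set (V ⊕ Fin N))).Connected) := by
  set e := ∑ v, deg G₀ v with he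
  refine ⟨9 * e + 260, ?_⟩
  set N := 9 * e + 260 with hN
  let r : V ⊕ Fin N := Sum.inr ⟨0, by omega⟩
  have htot : totalDeg (SimpleGraph.map Function.Embedding.inl G₀ : SimpleGraph (V ⊕ Fin N))
      = e := by
    unfold totalDeg
    rw [Fintype.sum_sum_type]
    simp [deg_map_inl, deg_map_inr, he]
  have hcard : 9 * e + 260 ≤ Fintype.card (V ⊕ Fin N) := by
    rw [Fintype.card_sum, Fintype.card_fin]
    omega
  refine ensures_of_invariants (J1 := Inv1 e r) (J2 := Inv2 e r) r ⟨Or.inr ?_, ?_⟩ ?_ ?_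
  · refine ⟨Sum.inr ⟨1, by omega⟩, by simp [r], deg_map_inr _ _⟩
  · intro u v hl
    have h1 := totalDeg_addEdge hl
    have h2 := Finset.card_pos.2 ⟨r, self_mem_comp
      (addEdge (SimpleGraph.map Function.Embedding.inl G₀ : SimpleGraph (V ⊕ Fin N)) u v) r⟩
    exact Inv2.of_totalDeg hl.2.2 (by omega) (by omega)
  · intro G hG
    exact ⟨hG.bad.imp_right Or.inr, hG.2⟩
  · intro G hG
    obtain ⟨h1, h2⟩ := hG.step hcard
    exact ⟨h1.imp_right Or.inr, h2⟩
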